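/- arXiv:2006.05511 — 2 statements merged into one kernel-verified Lean document; each statement's English description precedes it below -/
import Mathlib

section
/- Let n ≥ 3 and let G be any graph such that I(G,x) = I(U_n,x) as polynomials. Then G is isomorphic to U_n, or else n = 4 and G is isomorphic to the cycle C_4. -/
/-!
Both `G` and `U_n` have `n` vertices and an independent set of size `n - 2` (read off from the
coefficients of the common polynomial), so in each of them every edge meets some pair `{a, b}`.
For such a graph, let `S` be the set of the other vertices, and let `A`, `B`, `Z` count the vertices
of `S` not adjacent to `a`, not adjacent to `b`, adjacent to neither. Sorting independent sets
according to their trace on `{a, b}` gives (`eval_indepPoly_cover`)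

  `I(x) = (1+x)^|S| + x (1+x)^A + x (1+x)^B + [a ≁ b] x² (1+x)^Z`,

and for `U_n` the parameters are `A = 0`, `B = n - 3`, `a ∼ b`. Comparing values at `x = 1` and
`x = -1` suffices. If `a ∼ b`, then `2^A + 2^B = 2^(n-3) + 1`, so up to exchanging `a` and `b` one has
`A = 0` and `B = n - 3`, which describes `U_n`. If `a ≁ b`, the value at `-1` forces
`A = B = Z = 0`, the value at `1` then gives `3 = 2^(n-3) + 1`, so `n = 4` and `G` is `C_4`.
-/

open Polynomial SimpleGraph

/-- A finset of vertices is independent: pairwise nonadjacent. -/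
def IsIndepFinset {V : Type*} (G : SimpleGraph V) (s : Finset V) : Prop :=
  ∀ u ∈ s, ∀ v ∈ s, ¬ G.Adj u v

open Classical in
/-- The independence polynomial of a finite graph, with real coefficients. -/
noncomputable def indepPoly {V : Type*} [Fintype V] (G : SimpleGraph V) : Polynomial ℝ :=
  ∑ s : Finset V, if IsIndepFinset G s then (X : Polynomial ℝ) ^ s.card else 0

/-- `xi G` : the largest real root of the independence polynomial of `G`. -/
noncomputable def xi {V : Type*} [Fintype V] (G : SimpleGraph V) : ℝ :=
  sSup {x : ℝ | (indepPoly G).eval x = 0}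

/-- `Pre H G` (`H ⪯ G`) : `I(H,x) ≥ I(G,x)` for all `x ∈ [ξ(G), 0]`. -/
def Pre {V W : Type*} [Fintype V] [Fintype W] (H : SimpleGraph W) (G : SimpleGraph V) : Prop :=
  ∀ x ∈ Set.Icc (xi G) 0, (indepPoly G).eval x ≤ (indepPoly H).eval x

/-- `SPre H G` (`H ≺ G`). -/
def SPre {V W : Type*} [Fintype V] [Fintype W] (H : SimpleGraph W) (G : SimpleGraph V) : Prop :=
  Pre H G ∧ indepPoly H ≠ indepPoly G

open Classical in
/-- A graph is well-covered if all maximal independent sets have the same size. -/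
def WellCovered {V : Type*} (G : SimpleGraph V) : Prop :=
  ∀ s t : Finset V,
    IsIndepFinset G s → (∀ v ∉ s, ¬ IsIndepFinset G (insert v s)) →
    IsIndepFinset G t → (∀ v ∉ t, ¬ IsIndepFinset G (insert v t)) →
    s.card = t.card

/-- A connected unicyclic graph: connected with as many edges as vertices. -/
def Unicyclic {V : Type*} [Fintype V] (G : SimpleGraph V) : Prop :=
  G.Connected ∧ G.edgeSet.ncard = Fintype.card V

/-- The graph star (corona with `K₁`) of `G`: each vertex `inl v` gets a pendant
vertex `inr v`. -/
def corona {V : Type*} (G : SimpleGraph V) : SimpleGraph (V ⊕ V) :=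
  SimpleGraph.fromRel (fun a b =>
    match a, b with
    | Sum.inl u, Sum.inl v => G.Adj u v
    | Sum.inl u, Sum.inr v => u = v
    | _, _ => False)

/-- `Ugraph n` (`U_n`, `n ≥ 3`): a triangle `0,1,2` with `n - 3` pendant vertices attached
to vertex `0`. -/
def Ugraph (n : ℕ) : SimpleGraph (Fin n) :=
  SimpleGraph.fromRel (fun i j => i.val = 0 ∨ (i.val = 1 ∧ j.val = 2))

/-- `Dgraph n` (`D_n`, `n ≥ 4`): a path `0,1,...,n-1` plus the chord `{0,2}`, i.e. a
triangle with a path on `n - 3` vertices attached. -/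
def Dgraph (n : ℕ) : SimpleGraph (Fin n) :=
  SimpleGraph.fromRel (fun i j => j.val = i.val + 1 ∨ (i.val = 0 ∧ j.val = 2))

/-- `starGraph n` (`S_n = K_{1,n-1}`): vertex `0` adjacent to all other vertices. -/
def starGraph (n : ℕ) : SimpleGraph (Fin n) :=
  SimpleGraph.fromRel (fun i _ => i.val = 0)

/-- `Mgraph n` (`M_n`, odd `n ≥ 5`): a triangle `0,1,2` with `(n-3)/2` paths of length two
attached at vertex `0`; the middle vertices are the odd indices `3,5,...,n-2` and the leaf
attached to middle vertex `i` is `i + 1`. -/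
def Mgraph (n : ℕ) : SimpleGraph (Fin n) :=
  SimpleGraph.fromRel (fun i j =>
    (i.val = 0 ∧ (j.val ≤ 2 ∨ j.val % 2 = 1)) ∨ (i.val = 1 ∧ j.val = 2) ∨
    (i.val % 2 = 1 ∧ 3 ≤ i.val ∧ j.val = i.val + 1))

/-- `SPgraph g k ℓ` (`G(g,k,ℓ)`, for `g ∈ {3,5}` and `k + ℓ ≥ 1`): a cycle on the vertices
`0,...,g-1`, a copy of `P_k*` on the vertices `g,...,g+2k-1` (path vertices at even offsets,
each followed by its pendant vertex) joined to the cycle vertex `0` by an edge to the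
path end `g`, and a copy of `P_ℓ*` on the vertices `g+2k,...,g+2k+2ℓ-1` joined to the cycle
vertex `2` by an edge to the path end `g+2k`. -/
def SPgraph (g k ℓ : ℕ) : SimpleGraph (Fin (g + 2*k + 2*ℓ)) :=
  SimpleGraph.fromRel (fun i j =>
    (i.val < g ∧ j.val < g ∧ (j.val = i.val + 1 ∨ (i.val = 0 ∧ j.val = g - 1))) ∨
    (i.val = 0 ∧ 0 < k ∧ j.val = g) ∨
    (g ≤ i.val ∧ i.val < g + 2*k ∧ (i.val - g) % 2 = 0 ∧
      (j.val = i.val + 1 ∨ (j.val = i.val + 2 ∧ j.val < g + 2*k))) ∨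
    (i.val = 2 ∧ 0 < ℓ ∧ j.val = g + 2*k) ∨
    (g + 2*k ≤ i.val ∧ (i.val - (g + 2*k)) % 2 = 0 ∧
      (j.val = i.val + 1 ∨ j.val = i.val + 2)))

/-- `Gtree n` (`G_{2n}`, `n ≥ 5`): the tree on `2n` vertices with path `v_1 … v_n` at
indices `0,…,n-1`, `z_1` at index `n`, `y_1, y_2` at `n+1, n+2`, `x_1, x_2` at `n+3, n+4`
(with `v_3 z_1`, `v_3 y_1`, `y_1 y_2`, `v_5 x_1`, `x_1 x_2` edges), and pendant vertices
`w_j` at index `n + j - 1` attached to `v_j` for `6 ≤ j ≤ n`. -/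
def Gtree (n : ℕ) : SimpleGraph (Fin (2*n)) :=
  SimpleGraph.fromRel (fun a b =>
    (a.val + 1 = b.val ∧ b.val < n) ∨
    (a.val = 2 ∧ (b.val = n ∨ b.val = n + 1)) ∨
    (a.val = n + 1 ∧ b.val = n + 2) ∨
    (a.val = 4 ∧ b.val = n + 3) ∨
    (a.val = n + 3 ∧ b.val = n + 4) ∨
    (5 ≤ a.val ∧ a.val < n ∧ b.val = n + a.val))

open Classical in
lemma eval_indepPoly {V : Type*} [Fintype V] (G : SimpleGraph V) (x : ℝ) :
    (indepPoly G).eval x = ∑ s : Finset V, if IsIndepFinset G s then x ^ s.card else 0 := by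
  unfold indepPoly
  rw [eval_finsetSum]
  refine Finset.sum_congr rfl fun s _ => ?_
  split_ifs <;> simp

open Classical in
lemma coeff_indepPoly {V : Type*} [Fintype V] (G : SimpleGraph V) (k : ℕ) :
    (indepPoly G).coeff k =
      ((Finset.univ.filter fun s : Finset V => IsIndepFinset G s ∧ s.card = k).card : ℝ) := by
  unfold indepPoly
  rw [finsetSum_coeff, Finset.card_filter]
  push_cast
  refine Finset.sum_congr rfl fun s _ => ?_
  by_cases h1 : IsIndepFinset G s <;> simp [h1, coeff_X_pow, eq_comm]

lemma coeff_one_indepPoly {V : Type*} [Fintype V] (G : SimpleGraph V) :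
    (indepPoly G).coeff 1 = Fintype.card V := by
  classical
  rw [coeff_indepPoly]
  have : (Finset.univ.filter fun s : Finset V => IsIndepFinset G s ∧ s.card = 1)
      = Finset.univ.map ⟨fun v : V => ({v} : Finset V), Finset.singleton_injective⟩ := by
    ext s
    simp only [Finset.mem_filter, Finset.mem_univ, true_and, Finset.mem_map,
      Function.Embedding.coeFn_mk]
    constructor
    · rintro ⟨-, h⟩
      obtain ⟨v, rfl⟩ := Finset.card_eq_one.1 h
      exact ⟨v, rfl⟩
    · rintro ⟨v, rfl⟩
      simp [IsIndepFinset]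
  rw [this]
  simp

lemma exists_indep_iff_coeff_ne_zero {V : Type*} [Fintype V] (G : SimpleGraph V) (k : ℕ) :
    (indepPoly G).coeff k ≠ 0 ↔ ∃ s : Finset V, IsIndepFinset G s ∧ s.card = k := by
  classical
  rw [coeff_indepPoly, Nat.cast_ne_zero, ← Nat.pos_iff_ne_zero, Finset.card_pos]
  simp [Finset.Nonempty]

open Classical in
lemma sum_subsets {V : Type*} (S T : Finset V) (hT : T ⊆ S) (x : ℝ)
    (P : Finset V → Prop) (hP : ∀ t ⊆ S, P t ↔ t ⊆ T) :
    (∑ t ∈ S.powerset, if P t then x ^ t.card else 0) = (1 + x) ^ T.card := by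
  rw [← Finset.sum_filter]
  have : S.powerset.filter P = T.powerset := by
    ext t
    simp only [Finset.mem_filter, Finset.mem_powerset]
    constructor
    · rintro ⟨h1, h2⟩
      exact (hP t h1).1 h2
    · intro h
      exact ⟨h.trans hT, (hP t (h.trans hT)).2 h⟩
  rw [this, add_comm]
  simpa using Finset.sum_pow_mul_eq_add_pow x 1 T

open Classical in
/-- The independence polynomial of a graph in which every edge meets `{a, b}`; the four summands
count the independent sets whose trace on `{a, b}` is `∅`, `{a}`, `{b}`, `{a, b}`. -/
lemma eval_indepPoly_cover {V : Type*} [Fintype V] (G : SimpleGraph V) (a b : V) (S : Finset V)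
    (hab : a ≠ b) (haS : a ∉ S) (hbS : b ∉ S) (hS : ∀ v, v = a ∨ v = b ∨ v ∈ S)
    (hind : IsIndepFinset G S) (x : ℝ) :
    (indepPoly G).eval x = (1 + x) ^ S.card
      + x * (1 + x) ^ (S.filter fun v => ¬ G.Adj a v).card
      + x * (1 + x) ^ (S.filter fun v => ¬ G.Adj b v).card
      + (if G.Adj a b then 0 else
          x ^ 2 * (1 + x) ^ (S.filter fun v => ¬ G.Adj a v ∧ ¬ G.Adj b v).card) := by
  have huniv : (Finset.univ : Finset (Finset V)) = (insert a (insert b S)).powerset := by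
    ext s
    simp only [Finset.mem_univ, Finset.mem_powerset, true_iff]
    intro v _
    simpa using hS v
  have ha' : a ∉ insert b S := by simp [hab, haS]
  rw [eval_indepPoly, huniv, Finset.sum_powerset_insert ha', Finset.sum_powerset_insert hbS,
    Finset.sum_powerset_insert hbS]
  have h0 : (∑ t ∈ S.powerset, if IsIndepFinset G t then x ^ t.card else 0)
      = (1 + x) ^ S.card :=
    sum_subsets S S subset_rfl x _ fun t ht =>
      ⟨fun _ => ht, fun _ u hu v hv => hind u (ht hu) v (ht hv)⟩
  have hone : ∀ c ∉ S, (∑ t ∈ S.powerset,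
      if IsIndepFinset G (insert c t) then x ^ (insert c t).card else 0)
      = x * (1 + x) ^ (S.filter fun v => ¬ G.Adj c v).card := by
    intro c hc
    rw [← sum_subsets S _ (Finset.filter_subset _ _) x
      (fun t => IsIndepFinset G (insert c t)), Finset.mul_sum]
    · refine Finset.sum_congr rfl fun t ht => ?_
      have : c ∉ t := fun h => hc (Finset.mem_powerset.1 ht h)
      rw [Finset.card_insert_of_notMem this]
      split_ifs <;> ring
    · intro t ht
      constructor
      · intro h v hv
        exact Finset.mem_filter.2 ⟨ht hv, h c (by simp) v (by simp [hv])⟩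
      · intro h u hu v hv
        have key : ∀ w ∈ t, ¬ G.Adj c w := fun w hw => (Finset.mem_filter.1 (h hw)).2
        rcases Finset.mem_insert.1 hu with hu' | hu' <;>
          rcases Finset.mem_insert.1 hv with hv' | hv'
        · rw [hu', hv']
          exact G.loopless.irrefl _
        · exact hu' ▸ key v hv'
        · exact fun e => key u hu' (hv' ▸ e.symm)
        · exact hind u (ht hu') v (ht hv')
  have htwo : (∑ t ∈ S.powerset,
      if IsIndepFinset G (insert a (insert b t)) then x ^ (insert a (insert b t)).card else 0)
      = (if G.Adj a b then 0 else
          x ^ 2 * (1 + x) ^ (S.filter fun v => ¬ G.Adj a v ∧ ¬ G.Adj b v).card) := by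
    split_ifs with hadj
    · refine Finset.sum_eq_zero fun t _ => if_neg fun h => ?_
      exact h a (by simp) b (by simp) hadj
    rw [← sum_subsets S _ (Finset.filter_subset _ _) x
      (fun t => IsIndepFinset G (insert a (insert b t))), Finset.mul_sum]
    · refine Finset.sum_congr rfl fun t ht => ?_
      have h1 : b ∉ t := fun h => hbS (Finset.mem_powerset.1 ht h)
      have h2 : a ∉ insert b t := fun h => ha'
        (Finset.insert_subset_insert _ (Finset.mem_powerset.1 ht) h)
      rw [Finset.card_insert_of_notMem h2, Finset.card_insert_of_notMem h1]
      split_ifs <;> ring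
    · intro t ht
      constructor
      · intro h v hv
        exact Finset.mem_filter.2
          ⟨ht hv, h a (by simp) v (by simp [hv]), h b (by simp) v (by simp [hv])⟩
      · intro h u hu v hv
        have key : ∀ w ∈ t, ¬ G.Adj a w ∧ ¬ G.Adj b w := fun w hw => (Finset.mem_filter.1 (h hw)).2
        have hadj' : ¬ G.Adj b a := fun e => hadj e.symm
        simp only [Finset.mem_insert] at hu hv
        rcases hu with rfl | rfl | hu <;> rcases hv with rfl | rfl | hv
        · exact G.loopless.irrefl _
        · exact hadj
        · exact (key v hv).1
        · exact hadj'
        · exact G.loopless.irrefl _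
        · exact (key v hv).2
        · exact fun e => (key u hu).1 e.symm
        · exact fun e => (key u hu).2 e.symm
        · exact hind u (ht hu) v (ht hv)
  rw [h0, hone b hbS, hone a haS, htwo]
  ring

lemma ugraph_indep (n : ℕ) (hn : 3 ≤ n) :
    IsIndepFinset (Ugraph n) (Finset.univ \ {⟨0, by omega⟩, ⟨1, by omega⟩}) := by
  intro u hu v hv
  simp only [Finset.mem_sdiff, Finset.mem_univ, true_and, Finset.mem_insert,
    Finset.mem_singleton, Fin.ext_iff] at hu hv
  simp only [Ugraph, fromRel_adj]
  omega

lemma card_ugraph_indep (n : ℕ) (hn : 3 ≤ n) :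
    (Finset.univ \ {⟨0, by omega⟩, ⟨1, by omega⟩} : Finset (Fin n)).card = n - 2 := by
  rw [Finset.card_sdiff_of_subset (Finset.subset_univ _), Finset.card_pair (by simp)]
  simp

lemma eval_indepPoly_ugraph (n : ℕ) (hn : 3 ≤ n) (x : ℝ) :
    (indepPoly (Ugraph n)).eval x = (1 + x) ^ (n - 2) + x + x * (1 + x) ^ (n - 3) := by
  classical
  have hcard := card_ugraph_indep n hn
  rw [eval_indepPoly_cover (Ugraph n) ⟨0, by omega⟩ ⟨1, by omega⟩ _ (by simp) (by simp) (by simp)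
    (fun v => by simp only [Finset.mem_sdiff, Finset.mem_univ, Finset.mem_insert,
      Finset.mem_singleton]; tauto) (ugraph_indep n hn), card_ugraph_indep n hn]
  have hA : ((Finset.univ \ {⟨0, by omega⟩, ⟨1, by omega⟩} : Finset (Fin n)).filter
      fun v => ¬ (Ugraph n).Adj ⟨0, by omega⟩ v) = ∅ := by
    ext v
    simp only [Finset.mem_filter, Finset.mem_sdiff, Finset.mem_univ, true_and, Finset.mem_insert,
      Finset.mem_singleton, Fin.ext_iff, Ugraph, fromRel_adj, Finset.notMem_empty, ne_eq,
      true_or, and_true, iff_false]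
    omega
  have hB : ((Finset.univ \ {⟨0, by omega⟩, ⟨1, by omega⟩} : Finset (Fin n)).filter
      fun v => ¬ (Ugraph n).Adj ⟨1, by omega⟩ v)
      = (Finset.univ \ {⟨0, by omega⟩, ⟨1, by omega⟩}).erase ⟨2, by omega⟩ := by
    ext v
    simp only [Finset.mem_filter, Finset.mem_sdiff, Finset.mem_univ, true_and, Finset.mem_insert,
      Finset.mem_singleton, Fin.ext_iff, Ugraph, fromRel_adj, Finset.mem_erase, ne_eq]
    omega
  rw [hA, hB, Finset.card_erase_of_mem (by simp), hcard, if_pos (by simp [Ugraph])]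
  simp [Nat.sub_sub]

/-- A partial labelling of three distinct vertices extends to a bijection with `Fin n`. -/
lemma exists_labelling {V : Type*} [Fintype V] (n : ℕ) (hV : Fintype.card V = n) (hn : 3 ≤ n)
    (a b c : V) (hab : a ≠ b) (hac : a ≠ c) (hbc : b ≠ c) :
    ∃ g : Fin n ≃ V, g ⟨0, by omega⟩ = a ∧ g ⟨1, by omega⟩ = b ∧ g ⟨2, by omega⟩ = c := by
  classical
  let f : Fin n → V := fun i => if i.val = 0 then a else if i.val = 1 then b else c
  obtain ⟨g, hg⟩ := Finset.exists_equiv_extend_of_card_eq (t := (Finset.univ : Finset V))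
    (by simp [hV]) (s := {⟨0, by omega⟩, ⟨1, by omega⟩, ⟨2, by omega⟩}) (f := f)
    (Finset.subset_univ _) (by
      intro i hi j hj hij
      simp only [Finset.coe_insert, Finset.coe_singleton, Set.mem_insert_iff,
        Set.mem_singleton_iff] at hi hj
      rcases hi with rfl | rfl | rfl <;> rcases hj with rfl | rfl | rfl <;>
        simp_all [f, eq_comm])
  refine ⟨g.trans (Equiv.subtypeUnivEquiv Finset.mem_univ), ?_, ?_, ?_⟩
  · simpa [f] using hg ⟨0, by omega⟩ (by simp)
  · simpa [f] using hg ⟨1, by omega⟩ (by simp)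
  · simpa [f] using hg ⟨2, by omega⟩ (by simp)

open Classical in
lemma iso_ugraph {V : Type*} [Fintype V] (n : ℕ) (hn : 3 ≤ n) (G : SimpleGraph V) (a b : V)
    (S : Finset V) (hV : Fintype.card V = n) (hScard : S.card = n - 2)
    (hab : a ≠ b) (haS : a ∉ S) (hbS : b ∉ S) (hS : ∀ v, v = a ∨ v = b ∨ v ∈ S)
    (hind : IsIndepFinset G S) (hadj : G.Adj a b)
    (hA : (S.filter fun v => ¬ G.Adj a v).card = 0)
    (hB : (S.filter fun v => ¬ G.Adj b v).card = n - 3) :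
    Nonempty (G ≃g Ugraph n) := by
  have hsum := Finset.card_filter_add_card_filter_not (s := S) (fun v => G.Adj b v)
  obtain ⟨c, hc⟩ := Finset.card_eq_one.1
    (show (S.filter fun v => G.Adj b v).card = 1 by omega)
  have hbadj : ∀ v ∈ S, (G.Adj b v ↔ v = c) := by
    intro v hv
    have := Finset.ext_iff.1 hc v
    simpa [hv] using this
  have hcS : c ∈ S := by
    have : c ∈ S.filter fun v => G.Adj b v := by simp [hc]
    exact (Finset.mem_filter.1 this).1
  have haadj : ∀ v ∈ S, G.Adj a v := by
    intro v hv
    by_contra h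
    have : v ∈ S.filter fun v => ¬ G.Adj a v := Finset.mem_filter.2 ⟨hv, h⟩
    rw [Finset.card_eq_zero.1 hA] at this
    simp at this
  obtain ⟨g, h0, h1, h2⟩ := exists_labelling n hV hn a b c hab
    (fun h => haS (h ▸ hcS)) (fun h => hbS (h ▸ hcS))
  have e0 : ∀ i, g i = a ↔ i.val = 0 := fun i => by
    rw [← h0, g.apply_eq_iff_eq, Fin.ext_iff]
  have e1 : ∀ i, g i = b ↔ i.val = 1 := fun i => by
    rw [← h1, g.apply_eq_iff_eq, Fin.ext_iff]
  have e2 : ∀ i, g i = c ↔ i.val = 2 := fun i => by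
    rw [← h2, g.apply_eq_iff_eq, Fin.ext_iff]
  have hGadj : ∀ u v, G.Adj u v ↔ u ≠ v ∧ ((u = a ∨ u = b ∧ v = c) ∨ (v = a ∨ v = b ∧ u = c)) := by
    intro u v
    have := G.adj_comm u v
    have hl := G.loopless.irrefl
    have hi := hind u
    grind
  refine ⟨(RelIso.symm ⟨g, ?_⟩ : G ≃g Ugraph n)⟩
  intro i j
  rw [hGadj, Ugraph, fromRel_adj]
  simp only [e0, e1, e2, ne_eq, g.apply_eq_iff_eq]

open Classical in
lemma iso_cycleGraph {V : Type*} [Fintype V] (G : SimpleGraph V) (a b : V)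
    (S : Finset V) (hV : Fintype.card V = 4) (hScard : S.card = 2)
    (hab : a ≠ b) (haS : a ∉ S) (hbS : b ∉ S) (hS : ∀ v, v = a ∨ v = b ∨ v ∈ S)
    (hind : IsIndepFinset G S) (hadj : ¬ G.Adj a b)
    (hA : (S.filter fun v => ¬ G.Adj a v).card = 0)
    (hB : (S.filter fun v => ¬ G.Adj b v).card = 0) :
    Nonempty (G ≃g cycleGraph 4) := by
  have hall : ∀ c, (S.filter fun v => ¬ G.Adj c v).card = 0 → ∀ v ∈ S, G.Adj c v := by
    intro c hc v hv
    by_contra h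
    have : v ∈ S.filter fun v => ¬ G.Adj c v := Finset.mem_filter.2 ⟨hv, h⟩
    rw [Finset.card_eq_zero.1 hc] at this
    simp at this
  have ha := hall a hA
  have hb := hall b hB
  obtain ⟨c, hcS⟩ := Finset.card_pos.1 (show 0 < S.card by omega)
  obtain ⟨g, h0, h1, h2⟩ := exists_labelling 4 hV (by norm_num) a c b
    (fun h => haS (h ▸ hcS)) hab (fun h => hbS (h ▸ hcS))
  have e0 : ∀ i, g i = a ↔ i = 0 := fun i => by rw [← h0, g.apply_eq_iff_eq]; rfl
  have e2 : ∀ i, g i = b ↔ i = 2 := fun i => by rw [← h2, g.apply_eq_iff_eq]; rfl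
  have hGadj : ∀ u v, G.Adj u v ↔ ¬ ((u = a ∨ u = b) ↔ (v = a ∨ v = b)) := by
    intro u v
    have := G.adj_comm u v
    have hl := G.loopless.irrefl
    have hi := hind u
    have hc := G.adj_comm a b
    grind
  refine ⟨(RelIso.symm ⟨g, ?_⟩ : G ≃g cycleGraph 4)⟩
  intro i j
  rw [hGadj]
  simp only [e0, e2]
  revert i j
  decide

/-- If `I(G,x) = I(U_n,x)` (`n ≥ 3`) then `G ≅ U_n`, or `n = 4` and `G ≅ C_4`. -/
theorem stmt0 {V : Type*} [Fintype V] (n : ℕ) (hn : 3 ≤ n) (G : SimpleGraph V)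
    (h : indepPoly G = indepPoly (Ugraph n)) :
    Nonempty (G ≃g Ugraph n) ∨ (n = 4 ∧ Nonempty (G ≃g cycleGraph n)) := by
  classical
  have hV : Fintype.card V = n := by
    have h1 := congrArg (fun p => p.coeff 1) h
    simp only [coeff_one_indepPoly, Fintype.card_fin] at h1
    exact_mod_cast h1
  obtain ⟨S, hind, hScard⟩ := (exists_indep_iff_coeff_ne_zero G (n - 2)).1 (by
    rw [h]
    exact (exists_indep_iff_coeff_ne_zero _ _).2
      ⟨_, ugraph_indep n hn, card_ugraph_indep n hn⟩)
  obtain ⟨a, b, hab, hSc⟩ := Finset.card_eq_two.1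
    (show (Sᶜ).card = 2 by rw [Finset.card_compl, hV, hScard]; omega)
  have haS : a ∉ S := by
    have : a ∈ Sᶜ := by simp [hSc]
    simpa using this
  have hbS : b ∉ S := by
    have : b ∈ Sᶜ := by simp [hSc]
    simpa using this
  have hS : ∀ v, v = a ∨ v = b ∨ v ∈ S := by
    intro v
    have := Finset.ext_iff.1 hSc v
    simp only [Finset.mem_compl, Finset.mem_insert, Finset.mem_singleton] at this
    tauto
  have key : ∀ x : ℝ, _ := fun x =>
    (eval_indepPoly_cover G a b S hab haS hbS hS hind x).symm.trans
      ((congrArg (fun p => p.eval x) h).trans (eval_indepPoly_ugraph n hn x))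
  have hZA : (S.filter fun v => ¬ G.Adj a v ∧ ¬ G.Adj b v).card
      ≤ (S.filter fun v => ¬ G.Adj a v).card :=
    Finset.card_le_card fun v hv => by simp at hv ⊢; tauto
  have hZB : (S.filter fun v => ¬ G.Adj a v ∧ ¬ G.Adj b v).card
      ≤ (S.filter fun v => ¬ G.Adj b v).card :=
    Finset.card_le_card fun v hv => by simp at hv ⊢; tauto
  have key1 := key 1
  have key2 := key (-1)
  rw [hScard] at key1 key2
  by_cases hadj : G.Adj a b
  · left
    have hiso := iso_ugraph n hn G a b S hV hScard hab haS hbS hS hind hadj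
    have hiso' := iso_ugraph n hn G b a S hV hScard hab.symm hbS haS
      (fun v => by have := hS v; tauto) hind hadj.symm
    generalize (S.filter fun v => ¬ G.Adj a v).card = A at *
    generalize (S.filter fun v => ¬ G.Adj b v).card = B at *
    rw [if_pos hadj] at key1
    have e : (2 : ℕ) ^ A + 2 ^ B = 2 ^ (n - 3) + 1 := by
      have : (2 : ℝ) ^ A + 2 ^ B = 2 ^ (n - 3) + 1 := by
        norm_num at key1
        linarith
      exact_mod_cast this
    rcases Nat.eq_zero_or_pos A with hA | hA
    · refine hiso hA (Nat.pow_right_injective le_rfl (?_ : 2 ^ B = 2 ^ (n - 3)))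
      rw [hA] at e
      omega
    rcases Nat.eq_zero_or_pos B with hB | hB
    · refine hiso' hB (Nat.pow_right_injective le_rfl (?_ : 2 ^ A = 2 ^ (n - 3)))
      rw [hB] at e
      omega
    -- With `A, B > 0` the left side is even and at least `4`, the right side is odd or `2`.
    exfalso
    obtain ⟨A, rfl⟩ := Nat.exists_eq_succ_of_ne_zero hA.ne'
    obtain ⟨B, rfl⟩ := Nat.exists_eq_succ_of_ne_zero hB.ne'
    have hA1 := Nat.one_le_two_pow (n := A)
    have hB1 := Nat.one_le_two_pow (n := B)
    rcases Nat.eq_zero_or_pos (n - 3) with hm | hm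
    · rw [hm] at e
      omega
    · obtain ⟨m, hm⟩ := Nat.exists_eq_succ_of_ne_zero hm.ne'
      rw [hm] at e
      omega
  · right
    have hiso : n = 4 → _ := fun h4 => by
      subst h4
      exact iso_cycleGraph G a b S hV hScard hab haS hbS hS hind hadj
    generalize (S.filter fun v => ¬ G.Adj a v).card = A at *
    generalize (S.filter fun v => ¬ G.Adj b v).card = B at *
    generalize (S.filter fun v => ¬ G.Adj a v ∧ ¬ G.Adj b v).card = Z at *
    rw [if_neg hadj] at key1 key2
    -- At `x = -1` each power `(1+x)^k` is the indicator of `k = 0`.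
    have e2 : (0 : ℝ) ^ A + 0 ^ B - 0 ^ Z = 0 ^ (n - 3) + 1 := by
      norm_num at key2
      linarith
    have hm0 : (0 : ℝ) ≤ 0 ^ (n - 3) := by positivity
    have hA : A = 0 := by
      by_contra hA
      rw [zero_pow hA] at e2
      rcases eq_or_ne B 0 with hB | hB
      · have hZ : Z = 0 := by omega
        rw [hB, hZ] at e2
        norm_num at e2
        linarith
      · have hz : (0 : ℝ) ≤ 0 ^ Z := by positivity
        rw [zero_pow hB] at e2
        linarith
    have hZ : Z = 0 := by omega
    have hB : B = 0 := by
      by_contra hB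
      rw [zero_pow hB, hA, hZ] at e2
      norm_num at e2
      linarith
    have e1 : (2 : ℝ) ^ (n - 3) = 2 ^ 1 := by
      rw [hA, hB, hZ] at key1
      norm_num at key1 ⊢
      linarith
    have hm : n - 3 = 1 := Nat.pow_right_injective le_rfl
      (by exact_mod_cast e1 : (2 : ℕ) ^ (n - 3) = 2 ^ 1)
    have h4 : n = 4 := by omega
    subst h4
    exact ⟨rfl, hiso rfl hA hB⟩
end

section
/- Let n ≥ 3 and let G be a connected unicyclic graph on n vertices that is isomorphic to none of C_n, U_n, and (when n ≥ 4) D_n. Then C_n ≺ G and G ≺ U_n. -/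
/-!
For `x < 0` such that `I(G)` is positive on `[x, 0]`, every induced subgraph of `G` is positive at
`x` as well (`pos_of_insert`, `sp_of_pos`), so by `I(A) = I(A - v) + x I(A - N[v])` deleting
vertices increases the value (`SP.anti`). Both halves of the theorem reduce to a strict inequality
at such points (`spre_of`).

*Comparison with `C_n`.* In a connected graph `H` on `N` vertices, deleting a set `S` multiplies
the value at least by the ratio `I(P_{N-|S|}) / I(P_N)` (`key`, `conn_remove`), and
`I(H) ≤ I(P_N)` with equality only for the path (`conn_le_path`). For an edge `ab` of `G` that is
not a bridge put `H = G - ab`; then `I(G) = I(H) - x² I(G - N[a] - N[b])`. If `N[a] ∪ N[b]` has at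
least four vertices, this gives `I(G) I(P_n) ≤ I(H) (I(P_n) - x² I(P_{n-4})) = I(H) I(C_n)`, hence
`I(G) ≤ I(C_n)`. The inequality is strict unless `H` is a path and `|N[a] ∪ N[b]| = 4`, and a path
with a chord of that kind is `C_n` or `D_n` (`chord_cases`). A suitable edge `ab` exists unless `G`
is a triangle (`lt_cycle`).

*Comparison with `U_n`.* Induction on the number of vertices, removing a vertex `w` that is not a
cut vertex, shows that `I(G) ≥ I(U_n)` wherever `I(U_n)` is positive (`unicyclic_bound`). If `w` has
degree one, `G - w` is unicyclic and `G - N[w]` still has an edge, so that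
`I(G - N[w]) ≤ (1 + 2x)(1 + x)^(n-4)`. If `w` has degree two, `G - w` is a tree, which is bounded
below by the star (`tree_bound`), and `I(G - N[w]) ≤ (1 + x)^(n-3)`. Equality forces `G` to be `U_n`
or `C_4`.
-/

open Polynomial SimpleGraph

namespace UnicyclicAux

open Finset

/-! ### Independence polynomials of induced subgraphs -/

section Basic

set_option linter.unusedSectionVars false

variable {V : Type*} [DecidableEq V]

open Classical in
/-- The value at `x` of the independence polynomial of the subgraph of `G` induced by the
finset `A`. -/
noncomputable def ip (G : SimpleGraph V) (A : Finset V) (x : ℝ) : ℝ :=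
  ∑ s ∈ A.powerset, if IsIndepFinset G s then x ^ s.card else 0

open Classical in
/-- The vertices of `A` that are not adjacent to `v`. -/
noncomputable def avoid (G : SimpleGraph V) (v : V) (A : Finset V) : Finset V :=
  A.filter (fun u => ¬ G.Adj v u)

/-- The subgraph of `G` induced by `A` is (nonempty and) connected, phrased through cuts:
some edge leaves every nonempty proper subset of `A`. -/
def Conn (G : SimpleGraph V) (A : Finset V) : Prop :=
  A.Nonempty ∧ ∀ B ⊆ A, B.Nonempty → B ≠ A → ∃ u ∈ B, ∃ v ∈ A, v ∉ B ∧ G.Adj u v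

/-- All induced subgraphs of `G[A]` have a positive independence polynomial at `x`. -/
def SP (G : SimpleGraph V) (x : ℝ) (A : Finset V) : Prop :=
  ∀ S ⊆ A, 0 < ip G S x

@[simp] lemma mem_avoid {G : SimpleGraph V} {v u : V} {A : Finset V} :
    u ∈ avoid G v A ↔ u ∈ A ∧ ¬ G.Adj v u := by
  simp [avoid]

lemma avoid_subset (G : SimpleGraph V) (v : V) (A : Finset V) : avoid G v A ⊆ A :=
  fun _ hu => (mem_avoid.1 hu).1

@[simp] lemma ip_empty (G : SimpleGraph V) (x : ℝ) : ip G ∅ x = 1 := by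
  simp [ip, IsIndepFinset]

lemma ip_insert (G : SimpleGraph V) {A : Finset V} {v : V} (hv : v ∉ A) (x : ℝ) :
    ip G (insert v A) x = ip G A x + x * ip G (avoid G v A) x := by
  classical
  unfold ip
  rw [Finset.sum_powerset_insert hv, Finset.mul_sum]
  congr 1
  rw [← Finset.sum_subset (Finset.powerset_mono.2 (avoid_subset G v A))]
  · refine Finset.sum_congr rfl fun t ht => ?_
    rw [Finset.mem_powerset] at ht
    have hvt : v ∉ t := fun h => hv (mem_avoid.1 (ht h)).1
    have hiff : IsIndepFinset G (insert v t) ↔ IsIndepFinset G t := by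
      refine ⟨fun h u hu w hw => h u (mem_insert_of_mem hu) w (mem_insert_of_mem hw), ?_⟩
      intro h u hu w hw
      rcases mem_insert.1 hu with hu' | hu' <;> rcases mem_insert.1 hw with hw' | hw'
      · rw [hu', hw']
        exact G.loopless.irrefl _
      · rw [hu']
        exact (mem_avoid.1 (ht hw')).2
      · rw [hw']
        exact fun h' => (mem_avoid.1 (ht hu')).2 h'.symm
      · exact h u hu' w hw'
    simp only [hiff, card_insert_of_notMem hvt]
    split_ifs <;> ring
  · intro t ht htn
    rw [Finset.mem_powerset] at ht htn
    rw [if_neg]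
    intro h
    refine htn fun u hu => mem_avoid.2 ⟨ht hu, h v (mem_insert_self _ _) u (mem_insert_of_mem hu)⟩

lemma ip_erase (G : SimpleGraph V) {A : Finset V} {v : V} (hv : v ∈ A) (x : ℝ) :
    ip G A x = ip G (A.erase v) x + x * ip G (avoid G v (A.erase v)) x := by
  conv_lhs => rw [← insert_erase hv]
  exact ip_insert G (notMem_erase _ _) x

lemma ip_congr {G H : SimpleGraph V} {A : Finset V}
    (h : ∀ u ∈ A, ∀ v ∈ A, (G.Adj u v ↔ H.Adj u v)) (x : ℝ) : ip G A x = ip H A x := by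
  classical
  unfold ip
  refine Finset.sum_congr rfl fun s hs => ?_
  rw [Finset.mem_powerset] at hs
  have : IsIndepFinset G s ↔ IsIndepFinset H s := by
    refine forall₂_congr fun u hu => forall₂_congr fun v hv => ?_
    rw [h u (hs hu) v (hs hv)]
  simp only [this]

lemma ip_union (G : SimpleGraph V) (x : ℝ) (A B : Finset V) (hd : Disjoint A B)
    (hn : ∀ a ∈ A, ∀ b ∈ B, ¬ G.Adj a b) : ip G (A ∪ B) x = ip G A x * ip G B x := by
  induction hk : B.card using Nat.strong_induction_on generalizing B with
  | _ k ih =>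
  rcases B.eq_empty_or_nonempty with rfl | ⟨v, hv⟩
  · simp
  · have hvA : v ∉ A := fun h => disjoint_left.1 hd h hv
    have h1 : (A ∪ B).erase v = A ∪ B.erase v := by
      rw [erase_union_distrib, erase_eq_of_notMem hvA]
    have h2 : avoid G v (A ∪ B.erase v) = A ∪ avoid G v (B.erase v) := by
      ext u
      simp only [mem_avoid, mem_union]
      constructor
      · rintro ⟨h | h, h'⟩
        · exact Or.inl h
        · exact Or.inr ⟨h, h'⟩
      · rintro (h | ⟨h, h'⟩)
        · exact ⟨Or.inl h, fun h' => hn u h v hv h'.symm⟩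
        · exact ⟨Or.inr h, h'⟩
    have hlt : (B.erase v).card < k := hk ▸ card_erase_lt_of_mem hv
    have hs : avoid G v (B.erase v) ⊆ B.erase v := avoid_subset _ _ _
    have hsB : B.erase v ⊆ B := erase_subset _ _
    rw [ip_erase G (mem_union_right A hv), h1, h2, ip_erase G hv,
      ih _ hlt _ (hd.mono_right hsB) (fun a ha b hb => hn a ha b (hsB hb)) rfl,
      ih _ ((card_le_card hs).trans_lt hlt) _ (hd.mono_right (hs.trans hsB))
        (fun a ha b hb => hn a ha b (hsB (hs hb))) rfl]
    ring

lemma eval_indepPoly [Fintype V] (G : SimpleGraph V) (x : ℝ) :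
    (indepPoly G).eval x = ip G univ x := by
  classical
  unfold indepPoly ip
  rw [Polynomial.eval_finsetSum, powerset_univ]
  refine Finset.sum_congr rfl fun s _ => ?_
  split_ifs <;> simp

lemma ip_zero (G : SimpleGraph V) (A : Finset V) : ip G A 0 = 1 := by
  induction A using Finset.induction_on with
  | empty => simp
  | insert v A hv ih => rw [ip_insert G hv, ih]; ring

lemma ip_continuous (G : SimpleGraph V) (A : Finset V) : Continuous (ip G A) := by
  classical
  unfold ip
  refine continuous_finsetSum _ fun s _ => ?_
  split_ifs
  · exact continuous_pow _
  · exact continuous_const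

/-- Deleting the edge `ab` changes the independence polynomial by
`x² I(G[A] - N[a] - N[b], x)`, since the new independent sets are those containing `a` and `b`. -/
lemma ip_deleteEdge {G H : SimpleGraph V} {a b : V} (hab : G.Adj a b)
    (hH : ∀ u v, H.Adj u v ↔ G.Adj u v ∧ s(u, v) ≠ s(a, b)) {A : Finset V}
    (ha : a ∈ A) (hb : b ∈ A) (x : ℝ) :
    ip H A x = ip G A x + x ^ 2 * ip G (avoid G b (avoid G a (A.erase a))) x := by
  have hne : a ≠ b := hab.ne
  have key : ∀ S : Finset V, a ∉ S → ip H S x = ip G S x := by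
    intro S hS
    refine ip_congr (fun u hu v hv => ?_) x
    rw [hH]
    have h1 : u ≠ a := by rintro rfl; exact hS hu
    have h2 : v ≠ a := by rintro rfl; exact hS hv
    simp [h1, h2]
  have e1 : avoid H a (A.erase a) = insert b (avoid G a (A.erase a)) := by
    ext u
    simp only [mem_avoid, mem_erase, mem_insert, hH]
    by_cases hu : u = b
    · subst hu; simp [hne.symm, hb]
    · have : ¬ (a = b ∧ u = a) := fun h => hne h.1
      simp [hu, this]
  have hb' : b ∉ avoid G a (A.erase a) := fun h => (mem_avoid.1 h).2 hab
  have e2 : avoid H b (avoid G a (A.erase a)) = avoid G b (avoid G a (A.erase a)) := by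
    ext u
    simp only [mem_avoid, mem_erase, hH]
    refine and_congr_right fun h => ?_
    have : ¬ (b = a ∧ u = b) := fun h => hne h.1.symm
    have : u ≠ a := h.1.1
    simp [*]
  rw [ip_erase H ha, ip_erase G ha, e1, ip_insert H hb', e2, key _ (notMem_erase _ _),
    key _ (fun h => by simp at h), key _ (fun h => by simp at h)]
  ring

/-! ### Positivity of induced subgraphs -/

/-- If `I(G[insert v B])` is positive on `[x, 0]`, then so is `I(G[B])`: at the largest zero `z`
of `I(G[B])`, the vertex recurrence gives `I(G[insert v B], z) = z I(G[B] - N(v), z) ≤ 0`. -/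
lemma pos_of_insert (G : SimpleGraph V) (B : Finset V) :
    ∀ v ∉ B, ∀ x : ℝ, (∀ y ∈ Set.Icc x 0, 0 < ip G (insert v B) y) →
      ∀ y ∈ Set.Icc x 0, 0 < ip G B y := by
  induction hk : B.card using Nat.strong_induction_on generalizing B with
  | _ k ih =>
  subst hk
  -- Positivity passes from `B` to each of its subsets.
  have sub : ∀ j : ℕ, ∀ C ⊆ B, (B \ C).card = j → ∀ x : ℝ,
      (∀ y ∈ Set.Icc x 0, 0 < ip G B y) → ∀ y ∈ Set.Icc x 0, 0 < ip G C y := by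
    intro j
    induction j with
    | zero =>
      intro C hC hj x h
      have : B ⊆ C := by simpa [sdiff_eq_empty_iff_subset] using hj
      rwa [Subset.antisymm hC this]
    | succ j ihj =>
      intro C hC hj x h
      obtain ⟨w, hw⟩ : (B \ C).Nonempty := by rw [← card_pos]; omega
      have hwB := (mem_sdiff.1 hw).1
      have hwC := (mem_sdiff.1 hw).2
      have hins : insert w C ⊆ B := insert_subset hwB hC
      have hc : (B \ insert w C).card = j := by
        rw [card_sdiff_of_subset hins, card_insert_of_notMem hwC]
        rw [card_sdiff_of_subset hC] at hj
        omega
      refine ih C.card ?_ C rfl w hwC x (ihj _ hins hc x h)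
      exact card_lt_card (Finset.ssubset_iff_subset_ne.2 ⟨hC, fun e => hwC (e ▸ hwB)⟩)
  intro v hv x h y hy
  by_contra hneg
  push Not at hneg
  -- `Z` collects the points of `[y, 0]` where `I(G[B])` is not positive.
  let Z : Set ℝ := Set.Icc y 0 ∩ {t | ip G B t ≤ 0}
  have hZc : IsCompact Z :=
    isCompact_Icc.inter_right (isClosed_le (ip_continuous G B) continuous_const)
  have hZn : Z.Nonempty := ⟨y, ⟨le_rfl, hy.2⟩, hneg⟩
  obtain ⟨z, ⟨⟨hyz, hz0⟩, hzneg⟩, hzmax⟩ := hZc.exists_isGreatest hZn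
  have hzlt : z < 0 := by
    rcases hz0.lt_or_eq with h | h
    · exact h
    · rw [h] at hzneg
      have := ip_zero G B
      simp only [Set.mem_ofPred_eq] at hzneg
      linarith
  have habove : ∀ t ∈ Set.Ioc z 0, 0 < ip G B t := by
    intro t ht
    by_contra hc
    exact absurd (hzmax ⟨⟨hyz.trans ht.1.le, ht.2⟩, not_lt.1 hc⟩) (not_le.2 ht.1)
  have hav : 0 ≤ ip G (avoid G v B) z := by
    have hlim : Filter.Tendsto (ip G (avoid G v B)) (nhdsWithin z (Set.Ioi z))
        (nhds (ip G (avoid G v B) z)) := (ip_continuous G (avoid G v B)).continuousWithinAt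
    refine ge_of_tendsto hlim ?_
    filter_upwards [Ioc_mem_nhdsGT hzlt] with t ht
    refine (sub _ _ (avoid_subset G v B) rfl t ?_ t ⟨le_rfl, ht.2⟩).le
    exact fun s hs => habove s ⟨ht.1.trans_le hs.1, hs.2⟩
  have hfin := h z ⟨hy.1.trans hyz, hz0⟩
  rw [ip_insert G hv] at hfin
  simp only [Set.mem_ofPred_eq] at hzneg
  nlinarith

lemma sp_of_pos (G : SimpleGraph V) (A : Finset V) (x : ℝ) (hx : x ≤ 0)
    (h : ∀ y ∈ Set.Icc x 0, 0 < ip G A y) : SP G x A := by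
  suffices H : ∀ j : ℕ, ∀ C ⊆ A, (A \ C).card = j → ∀ y ∈ Set.Icc x 0, 0 < ip G C y from
    fun S hS => H _ S hS rfl x ⟨le_rfl, hx⟩
  intro j
  induction j with
  | zero =>
    intro C hC hj
    have : A ⊆ C := by simpa [sdiff_eq_empty_iff_subset] using hj
    rwa [Subset.antisymm hC this]
  | succ j ihj =>
    intro C hC hj
    obtain ⟨w, hw⟩ : (A \ C).Nonempty := by rw [← card_pos]; omega
    have hwA := (mem_sdiff.1 hw).1
    have hwC := (mem_sdiff.1 hw).2
    have hins : insert w C ⊆ A := insert_subset hwA hC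
    have hc : (A \ insert w C).card = j := by
      rw [card_sdiff_of_subset hins, card_insert_of_notMem hwC]
      rw [card_sdiff_of_subset hC] at hj
      omega
    exact pos_of_insert G C w hwC x (ihj _ hins hc)

lemma SP.mono {G : SimpleGraph V} {x : ℝ} {A B : Finset V} (h : SP G x A) (hBA : B ⊆ A) :
    SP G x B := fun S hS => h S (hS.trans hBA)

/-- For negative `x` in the positive range, passing to a smaller vertex set increases the value. -/
lemma SP.anti {G : SimpleGraph V} {x : ℝ} {A B : Finset V} (h : SP G x A) (hx : x < 0)
    (hBA : B ⊆ A) : ip G A x ≤ ip G B x ∧ (B ≠ A → ip G A x < ip G B x) := by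
  induction hj : (A \ B).card generalizing B with
  | zero =>
    have : A ⊆ B := by simpa [sdiff_eq_empty_iff_subset] using hj
    have e := Subset.antisymm hBA this
    subst e
    simp
  | succ j ihj =>
    obtain ⟨w, hw⟩ : (A \ B).Nonempty := by rw [← card_pos]; omega
    have hwA := (mem_sdiff.1 hw).1
    have hwB := (mem_sdiff.1 hw).2
    have hins : insert w B ⊆ A := insert_subset hwA hBA
    have hc : (A \ insert w B).card = j := by
      rw [card_sdiff_of_subset hins, card_insert_of_notMem hwB]
      rw [card_sdiff_of_subset hBA] at hj
      omega
    have h1 := (ihj hins hc).1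
    rw [ip_insert G hwB] at h1
    have h2 := h _ ((avoid_subset G w B).trans hBA)
    have : ip G A x < ip G B x := by nlinarith
    exact ⟨this.le, fun _ => this⟩

end Basic

/-! ### Independence polynomials of paths -/

/-- `pp x (k + 1)` is the value at `x` of the independence polynomial of the path on `k` vertices;
the index is shifted by one so that the recurrence also covers the formal value `pp x 0 = 1`. -/
noncomputable def pp (x : ℝ) : ℕ → ℝ
  | 0 => 1
  | 1 => 1
  | (k + 2) => pp x (k + 1) + x * pp x k

lemma pp_succ_succ (x : ℝ) (k : ℕ) : pp x (k + 2) = pp x (k + 1) + x * pp x k := rfl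

lemma pp_add (x : ℝ) (a b : ℕ) :
    pp x (a + b + 2) = pp x (a + 1) * pp x (b + 1) + x * (pp x a * pp x b) := by
  induction a using Nat.twoStepInduction with
  | zero => simp [pp]
  | one =>
    rw [show 1 + b + 2 = (b + 1) + 2 by ring, pp_succ_succ, pp_succ_succ]
    simp only [pp]
    ring
  | more a h1 h2 =>
    rw [show a + 2 + b + 2 = (a + b + 2) + 2 by ring, pp_succ_succ, h1,
      show a + b + 2 + 1 = a + 1 + b + 2 by ring, h2, pp_succ_succ x (a + 1), pp_succ_succ x a]
    ring

lemma pp_add' (x : ℝ) (a b : ℕ) :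
    pp x (a + b + 3) = pp x (a + 2) * pp x (b + 2) - x ^ 2 * (pp x a * pp x b) := by
  rw [show a + b + 3 = (a + 1) + b + 2 by ring, pp_add, pp_succ_succ x b, pp_succ_succ x a]
  ring

lemma pp_submul {x : ℝ} (a b : ℕ) (h : ∀ k ≤ a + b + 1, 0 < pp x k) :
    pp x (a + b + 1) ≤ pp x (a + 1) * pp x (b + 1) := by
  rcases a with _ | a
  · simp [pp]
  rcases b with _ | b
  · simp [pp]
  rw [show a + 1 + (b + 1) + 1 = a + b + 3 by ring, pp_add']
  have := mul_pos (h a (by omega)) (h b (by omega))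
  nlinarith [sq_nonneg x]

lemma pp_lt {x : ℝ} (hx : x < 0) {N : ℕ} (h : ∀ k ≤ N, 0 < pp x k) {i j : ℕ} (hi : 1 ≤ i)
    (hij : i < j) (hj : j ≤ N) : pp x j < pp x i := by
  induction j, hij using Nat.le_induction with
  | base =>
    obtain ⟨i, rfl⟩ : ∃ k, i = k + 1 := ⟨i - 1, by omega⟩
    have h1 := pp_succ_succ x i
    have h2 := h i (by omega)
    have : x * pp x i < 0 := mul_neg_of_neg_of_pos hx h2
    simp only [Nat.succ_eq_add_one, add_assoc] at *
    norm_num at *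
    linarith
  | succ j hj' ih =>
    have h0 := ih (by omega)
    obtain ⟨i, rfl⟩ : ∃ k, j = k + 1 := ⟨j - 1, by omega⟩
    have h1 := pp_succ_succ x i
    have h2 := h i (by omega)
    have : x * pp x i < 0 := mul_neg_of_neg_of_pos hx h2
    simp only [add_assoc] at *
    norm_num at *
    linarith

section Paths

set_option linter.unusedSectionVars false

variable {V : Type*} [DecidableEq V]

/-- `f 0, …, f (N - 1)` are distinct and span an induced path of `G`, in this order. -/
def PathSeq (G : SimpleGraph V) (f : ℕ → V) (N : ℕ) : Prop :=
  ∀ i < N, ∀ j < N, (f i = f j → i = j) ∧ (G.Adj (f i) (f j) ↔ i + 1 = j ∨ j + 1 = i)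

lemma PathSeq.ip_eq {G : SimpleGraph V} {f : ℕ → V} {N : ℕ} (h : PathSeq G f N) (x : ℝ) :
    ip G ((range N).image f) x = pp x (N + 1) := by
  induction N using Nat.twoStepInduction with
  | zero => simp [pp]
  | one =>
    have : (range 1).image f = insert (f 0) ∅ := by simp
    rw [this, ip_insert G (by simp)]
    have : avoid G (f 0) ∅ = ∅ := by ext; simp
    simp [this, pp]
  | more N h1 h2 =>
    have e : (range (N + 2)).image f = insert (f (N + 1)) ((range (N + 1)).image f) := by
      rw [range_add_one (n := N + 1), image_insert]
    have hn : f (N + 1) ∉ (range (N + 1)).image f := by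
      simp only [mem_image, mem_range, not_exists, not_and]
      intro i hi hf
      have := (h i (by omega) (N + 1) (by omega)).1 hf
      omega
    have ea : avoid G (f (N + 1)) ((range (N + 1)).image f) = (range N).image f := by
      ext u
      simp only [mem_avoid, mem_image, mem_range]
      constructor
      · rintro ⟨⟨i, hi, rfl⟩, hadj⟩
        rw [(h (N + 1) (by omega) i (by omega)).2] at hadj
        exact ⟨i, by omega, rfl⟩
      · rintro ⟨i, hi, rfl⟩
        refine ⟨⟨i, by omega, rfl⟩, ?_⟩
        rw [(h (N + 1) (by omega) i (by omega)).2]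
        omega
    rw [e, ip_insert G hn, ea, h1 (fun i hi j hj => h i (by omega) j (by omega)),
      h2 (fun i hi j hj => h i (by omega) j (by omega))]
    rfl

/-! ### Connected vertex sets -/

lemma conn_singleton (G : SimpleGraph V) (v : V) : Conn G {v} := by
  refine ⟨singleton_nonempty v, fun B hB hne hne' => ?_⟩
  rcases subset_singleton_iff.1 hB with h | h
  · simp [h] at hne
  · exact absurd h hne'

lemma conn_insert {G : SimpleGraph V} {C : Finset V} {c u : V} (hC : Conn G C) (hc : c ∈ C)
    (h : G.Adj c u) : Conn G (insert u C) := by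
  refine ⟨insert_nonempty _ _, fun B hB hne hne' => ?_⟩
  by_cases h1 : C ⊆ B
  · have hu : u ∉ B := fun hu => hne' (Subset.antisymm hB (insert_subset hu h1))
    exact ⟨c, h1 hc, u, mem_insert_self _ _, hu, h⟩
  · by_cases h2 : (B ∩ C).Nonempty
    · obtain ⟨a, ha, b, hb, hb', hab⟩ := hC.2 (B ∩ C) inter_subset_right h2
        (fun e => h1 (e ▸ inter_subset_left))
      exact ⟨a, (mem_inter.1 ha).1, b, mem_insert_of_mem hb,
        fun hbB => hb' (mem_inter.2 ⟨hbB, hb⟩), hab⟩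
    · have hBu : ∀ z ∈ B, z = u := by
        intro z hz
        rcases mem_insert.1 (hB hz) with h | h
        · exact h
        · exact absurd ⟨z, mem_inter.2 ⟨hz, h⟩⟩ h2
      obtain ⟨z, hz⟩ := hne
      have hzu := hBu z hz
      subst hzu
      exact ⟨z, hz, c, mem_insert_of_mem hc, fun hcB => h2 ⟨c, mem_inter.2 ⟨hcB, hc⟩⟩, h.symm⟩

/-- A connected set with at least two vertices has a vertex whose removal leaves it connected. -/
lemma conn_noncut {G : SimpleGraph V} {B : Finset V} (hB : Conn G B) (h2 : 2 ≤ B.card) :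
    ∃ w ∈ B, Conn G (B.erase w) := by
  classical
  -- A maximal connected proper subset misses exactly one vertex.
  obtain ⟨b, hb⟩ := hB.1
  have hne : (B.powerset.filter (fun C => Conn G C ∧ C ≠ B)).Nonempty := by
    refine ⟨{b}, mem_filter.2 ⟨mem_powerset.2 (singleton_subset_iff.2 hb), conn_singleton G b, ?_⟩⟩
    rintro rfl
    simp at h2
  obtain ⟨C, hC, hmax⟩ := exists_max_image _ Finset.card hne
  simp only [mem_filter, mem_powerset] at hC hmax
  obtain ⟨u, hu, v, hv, hvC, huv⟩ := hB.2 C hC.1 hC.2.1.1 hC.2.2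
  have hcon := conn_insert hC.2.1 hu huv
  have heq : insert v C = B := by
    by_contra hne'
    have := hmax (insert v C) ⟨insert_subset hv hC.1, hcon, hne'⟩
    rw [card_insert_of_notMem hvC] at this
    omega
  refine ⟨v, hv, ?_⟩
  rw [← heq, erase_insert hvC]
  exact hC.2.1

/-- A union of components of `G[A]`, together with a vertex `w` for which `G[insert w A]` is
connected, is connected. -/
lemma conn_part {G : SimpleGraph V} {A A₁ : Finset V} {w : V} (h : Conn G (insert w A))
    (hw : w ∉ A) (hA₁ : A₁ ⊆ A) (hn : ∀ u ∈ A₁, ∀ v ∈ A, v ∉ A₁ → ¬ G.Adj u v) :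
    Conn G (insert w A₁) := by
  have main : ∀ B ⊆ A₁, B.Nonempty → ∃ u ∈ B, ∃ v ∈ insert w A₁, v ∉ B ∧ G.Adj u v := by
    intro B hB hne
    have hwB : w ∉ B := fun hwB => hw (hA₁ (hB hwB))
    obtain ⟨u, hu, v, hv, hvB, huv⟩ := h.2 B ((hB.trans hA₁).trans (subset_insert _ _)) hne
      (fun e => hwB (e ▸ mem_insert_self _ _))
    refine ⟨u, hu, v, ?_, hvB, huv⟩
    rcases mem_insert.1 hv with rfl | hv
    · exact mem_insert_self _ _
    · by_contra hv'
      exact hn u (hB hu) v hv (fun h => hv' (mem_insert_of_mem h)) huv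
  refine ⟨insert_nonempty _ _, fun B hB hne hne' => ?_⟩
  by_cases hwB : w ∈ B
  · have hsub : insert w A₁ \ B ⊆ A₁ := by
      intro z hz
      rcases mem_insert.1 (mem_sdiff.1 hz).1 with rfl | hz'
      · exact absurd hwB (mem_sdiff.1 hz).2
      · exact hz'
    obtain ⟨u, hu, v, hv, hvB, huv⟩ := main _ hsub
      (sdiff_nonempty.2 fun h' => hne' (Subset.antisymm hB h'))
    refine ⟨v, ?_, u, (mem_sdiff.1 hu).1, (mem_sdiff.1 hu).2, huv.symm⟩
    by_contra hvB'
    exact hvB (mem_sdiff.2 ⟨hv, hvB'⟩)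
  · refine main B (fun z hz => ?_) hne
    rcases mem_insert.1 (hB hz) with rfl | hz'
    · exact absurd hz hwB
    · exact hz'

/-! ### Comparing connected sets with paths -/

/-- Two bounds on `I(A_i + w) / I(A_i)` multiply: if there are no edges between `A₁` and `A₂`,
the vertex `w` costs at least as much in `A₁ ∪ A₂` as joining two paths by a middle vertex. -/
lemma combine {G : SimpleGraph V} {x : ℝ} (hx : x < 0) {A₁ A₂ : Finset V} {w : V}
    (h₁ : w ∉ A₁) (h₂ : w ∉ A₂) (hd : Disjoint A₁ A₂) (hn : ∀ a ∈ A₁, ∀ b ∈ A₂, ¬ G.Adj a b)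
    (hsp : SP G x (A₁ ∪ A₂)) {m₁ m₂ : ℕ} (hp₁ : ∀ k ≤ m₁ + 1, 0 < pp x k)
    (hp₂ : ∀ k ≤ m₂ + 1, 0 < pp x k)
    (hi₁ : ip G (insert w A₁) x * pp x (m₁ + 1) ≤ ip G A₁ x * pp x (m₁ + 2))
    (hi₂ : ip G (insert w A₂) x * pp x (m₂ + 1) ≤ ip G A₂ x * pp x (m₂ + 2)) :
    ip G (insert w (A₁ ∪ A₂)) x * (pp x (m₁ + 1) * pp x (m₂ + 1)) ≤
      ip G (A₁ ∪ A₂) x * pp x (m₁ + m₂ + 2) := by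
  have aux : ∀ (A : Finset V) (m : ℕ), w ∉ A →
      ip G (insert w A) x * pp x (m + 1) ≤ ip G A x * pp x (m + 2) →
      ip G A x * pp x m ≤ ip G (avoid G w A) x * pp x (m + 1) := by
    intro A m hw h
    rw [ip_insert G hw, pp_succ_succ] at h
    nlinarith
  have k₁ := aux A₁ m₁ h₁ hi₁
  have k₂ := aux A₂ m₂ h₂ hi₂
  have e : avoid G w (A₁ ∪ A₂) = avoid G w A₁ ∪ avoid G w A₂ := by
    ext u; simp only [mem_avoid, mem_union]; tauto
  have s₁ := avoid_subset G w A₁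
  have s₂ := avoid_subset G w A₂
  have hw : w ∉ A₁ ∪ A₂ := by simp [h₁, h₂]
  rw [ip_insert G hw, e, ip_union G x A₁ A₂ hd hn, ip_union G x _ _ (hd.mono s₁ s₂)
    (fun a ha b hb => hn a (s₁ ha) b (s₂ hb)), pp_add]
  have p₁ := hsp A₁ subset_union_left
  have p₂ := hsp A₂ subset_union_right
  have q₁ := hsp _ (s₁.trans subset_union_left)
  have hm := mul_le_mul k₁ k₂ (mul_pos p₂ (hp₂ _ (by omega))).le
    (mul_pos q₁ (hp₁ _ (by omega))).le
  nlinarith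

/-- In a connected set with `N` vertices, removing a vertex `w` multiplies the value of the
independence polynomial by at least as much as shortening the path on `N` vertices by an end
vertex; equality forces a path ending in `w`. -/
lemma key {G : SimpleGraph V} {x : ℝ} (hx : x < 0) (N : ℕ) : ∀ B : Finset V, B.card = N →
    Conn G B → SP G x B → (∀ k ≤ N + 1, 0 < pp x k) ∧ ∀ w ∈ B,
      ip G B x * pp x N ≤ ip G (B.erase w) x * pp x (N + 1) ∧
      (ip G B x * pp x N = ip G (B.erase w) x * pp x (N + 1) →
        ∃ f : ℕ → V, f 0 = w ∧ B = (range N).image f ∧ PathSeq G f N) := by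
  induction N using Nat.strong_induction_on with
  | _ N ih =>
  intro B hcard hB hsp
  have hpos := hB.1.card_pos
  -- Positivity of the path values up to index `N` comes from a connected set of size `N - 1`.
  have hppN : ∀ k ≤ N, 0 < pp x k := by
    intro k hk
    rcases Nat.lt_or_ge N 2 with h2 | h2
    · have : k = 0 ∨ k = 1 := by omega
      rcases this with rfl | rfl <;> simp [pp]
    · obtain ⟨w, hw, hcw⟩ := conn_noncut hB (by omega)
      refine (ih (N - 1) (by omega) (B.erase w) (by rw [card_erase_of_mem hw, hcard]) hcw
        (hsp.mono (erase_subset _ _))).1 k (by omega)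
  have hBpos := hsp B (Subset.refl _)
  have main : ∀ w ∈ B,
      ip G B x * pp x N ≤ ip G (B.erase w) x * pp x (N + 1) ∧
      (ip G B x * pp x N = ip G (B.erase w) x * pp x (N + 1) →
        ∃ f : ℕ → V, f 0 = w ∧ B = (range N).image f ∧ PathSeq G f N) := by
    intro w hw
    have hcA : (B.erase w).card = N - 1 := by rw [card_erase_of_mem hw, hcard]
    have hwA : w ∉ B.erase w := notMem_erase _ _
    have hins : insert w (B.erase w) = B := insert_erase hw
    have hAsub : B.erase w ⊆ B := erase_subset _ _
    generalize B.erase w = A at *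
    have hspA : SP G x A := hsp.mono hAsub
    subst hins
    obtain ⟨m, rfl⟩ : ∃ m, N = m + 1 := ⟨N - 1, by omega⟩
    simp only [Nat.add_sub_cancel] at hcA
    by_cases hA : Conn G A
    · have hm := hA.1.card_pos
      obtain ⟨u, huA, v, hv, hvA, huv⟩ := hB.2 A hAsub hA.1 (fun e => hwA (e ▸ hw))
      have hvw : v = w := (mem_insert.1 hv).resolve_right hvA
      subst hvw
      obtain ⟨m', rfl⟩ : ∃ m', m = m' + 1 := ⟨m - 1, by omega⟩
      have hIH := (ih (m' + 1) (by omega) A hcA hA hspA).2 u huA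
      have hsub : avoid G v A ⊆ A.erase u := by
        intro z hz
        refine mem_erase.2 ⟨?_, (mem_avoid.1 hz).1⟩
        rintro rfl
        exact (mem_avoid.1 hz).2 huv.symm
      have hanti := (hspA.mono (erase_subset u A)).anti hx hsub
      have hrec := ip_insert G hwA x
      have hpp := hppN (m' + 2) (by omega)
      have hr := pp_succ_succ x (m' + 1)
      rw [hrec, hr]
      have i1 := mul_le_mul_of_nonneg_right hanti.1 hpp.le
      refine ⟨by nlinarith [hIH.1], fun heq => ?_⟩
      have j1 : x * (ip G (avoid G v A) x * pp x (m' + 1 + 1)) =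
          x * (ip G A x * pp x (m' + 1)) := by linarith
      have j2 := mul_left_cancel₀ hx.ne j1
      have j3 : ip G (avoid G v A) x = ip G (A.erase u) x := by
        refine le_antisymm ?_ hanti.1
        refine le_of_mul_le_mul_right ?_ hpp
        rw [j2]
        exact hIH.1
      have j4 : avoid G v A = A.erase u := by
        by_contra hne
        exact absurd j3 (hanti.2 hne).ne'
      obtain ⟨f, hf0, hfA, hf⟩ := hIH.2 (le_antisymm hIH.1 (by rw [← j2, ← j3]))
      have hfmem : ∀ i < m' + 1, f i ∈ A := fun i hi => by
        rw [hfA]; exact mem_image_of_mem f (mem_range.2 hi)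
      have hadj : ∀ i < m' + 1, (G.Adj v (f i) ↔ i = 0) := by
        intro i hi
        constructor
        · intro h
          by_contra h0
          have h1 : f i ∈ A.erase u := by
            refine mem_erase.2 ⟨fun e => h0 ?_, hfmem i hi⟩
            exact (hf i hi 0 (by omega)).1 (e.trans hf0.symm)
          rw [← j4] at h1
          exact (mem_avoid.1 h1).2 h
        · rintro rfl
          rw [hf0]; exact huv.symm
      refine ⟨fun i => if i = 0 then v else f (i - 1), by simp, ?_, ?_⟩
      · ext z
        simp only [mem_insert, mem_image, mem_range]
        constructor
        · rintro (rfl | hz)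
          · exact ⟨0, by omega, by simp⟩
          · rw [hfA] at hz
            simp only [mem_image, mem_range] at hz
            obtain ⟨i, hi, rfl⟩ := hz
            exact ⟨i + 1, by omega, by simp⟩
        · rintro ⟨i, hi, rfl⟩
          rcases i with _ | i
          · simp
          · right
            simpa using hfmem i (by omega)
      · intro i hi j hj
        rcases i with _ | i <;> rcases j with _ | j
        · simp
        · simp only [↓reduceIte, Nat.succ_ne_zero, Nat.add_sub_cancel]
          rw [hadj j (by omega)]
          exact ⟨fun e => absurd (e ▸ hfmem j (by omega)) hvA, by rw [or_false]; omega⟩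
        · simp only [↓reduceIte, Nat.succ_ne_zero, Nat.add_sub_cancel]
          rw [G.adj_comm, hadj i (by omega)]
          exact ⟨fun e => absurd (e ▸ hfmem i (by omega)) hvA, by rw [false_or]; omega⟩
        · simp only [↓reduceIte, Nat.succ_ne_zero, Nat.add_sub_cancel]
          have := hf i (by omega) j (by omega)
          exact ⟨fun e => by rw [this.1 e], by rw [this.2]; omega⟩
    · rcases A.eq_empty_or_nonempty with rfl | hne
      · have : m = 0 := by simpa using hcA.symm
        subst this
        have ea : avoid G w ∅ = ∅ := by ext; simp
        rw [ip_insert G hwA, ea]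
        refine ⟨by simp [pp], fun _ => ⟨fun _ => w, rfl, by simp, ?_⟩⟩
        intro i hi j hj
        have h1 : i = 0 := by omega
        have h2 : j = 0 := by omega
        subst h1; subst h2
        simp
      · -- Here `A` splits into `A₁` and `A₂`, and the inequality is strict.
        have hsplit : ∃ A₁ ⊆ A, A₁.Nonempty ∧ A₁ ≠ A ∧
            ∀ u ∈ A₁, ∀ v ∈ A, v ∉ A₁ → ¬ G.Adj u v := by
          unfold Conn at hA
          push Not at hA
          exact hA hne
        obtain ⟨A₁, hA₁, hne₁, hneq, hno⟩ := hsplit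
        have hdis : Disjoint A₁ (A \ A₁) := disjoint_sdiff
        have hun : A₁ ∪ (A \ A₁) = A := union_sdiff_of_subset hA₁
        have hc := card_union_of_disjoint hdis
        rw [hun, hcA] at hc
        have hne₂ : (A \ A₁).Nonempty :=
          sdiff_nonempty.2 fun h => hneq (Subset.antisymm hA₁ h)
        have hno' : ∀ a ∈ A₁, ∀ b ∈ A \ A₁, ¬ G.Adj a b := fun a ha b hb =>
          hno a ha b (mem_sdiff.1 hb).1 (mem_sdiff.1 hb).2
        have hc₁ := conn_part hB hwA hA₁ hno
        have hc₂ := conn_part hB hwA (sdiff_subset (s := A) (t := A₁)) (by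
          intro u hu v hv hv' huv
          have : v ∈ A₁ := by
            by_contra h; exact hv' (mem_sdiff.2 ⟨hv, h⟩)
          exact hno' v this u hu huv.symm)
        have hw₁ : w ∉ A₁ := fun h => hwA (hA₁ h)
        have hw₂ : w ∉ A \ A₁ := fun h => hwA (mem_sdiff.1 h).1
        have hp₁ := hne₁.card_pos
        have hp₂ := hne₂.card_pos
        generalize A \ A₁ = A₂ at *
        subst hun
        obtain ⟨a, ha⟩ : ∃ a, A₁.card = a + 1 := ⟨A₁.card - 1, by omega⟩
        obtain ⟨b, hb⟩ : ∃ b, A₂.card = b + 1 := ⟨A₂.card - 1, by omega⟩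
        have r₁ := ih (a + 2) (by omega) (insert w A₁) (by rw [card_insert_of_notMem hw₁, ha])
          hc₁ (hsp.mono (insert_subset_insert w subset_union_left))
        have r₂ := ih (b + 2) (by omega) (insert w A₂) (by rw [card_insert_of_notMem hw₂, hb])
          hc₂ (hsp.mono (insert_subset_insert w subset_union_right))
        have t₁ := (r₁.2 w (mem_insert_self _ _)).1
        have t₂ := (r₂.2 w (mem_insert_self _ _)).1
        rw [erase_insert hw₁] at t₁
        rw [erase_insert hw₂] at t₂
        have hK := combine (m₁ := a + 1) (m₂ := b + 1) hx hw₁ hw₂ hdis hno' hspA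
          (fun k hk => r₁.1 k (by omega)) (fun k hk => r₂.1 k (by omega)) t₁ t₂
        have hm : m = a + b + 2 := by omega
        subst hm
        have hsub := pp_add' x a b
        have hpos' := mul_pos (r₁.1 a (by omega)) (r₂.1 b (by omega))
        have hlt : pp x (a + b + 2 + 1) < pp x (a + 1 + 1) * pp x (b + 1 + 1) := by
          have hx2 : 0 < x ^ 2 := by nlinarith [mul_pos_of_neg_of_neg hx hx]
          have := mul_pos hx2 hpos'
          simp only [add_assoc] at *
          norm_num at *
          linarith
        have hstrict := (mul_lt_mul_of_pos_left hlt hBpos).trans_le hK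
        rw [show a + 1 + (b + 1) + 2 = a + b + 2 + 1 + 1 by ring] at hstrict
        exact ⟨hstrict.le, fun h => absurd h hstrict.ne⟩
  refine ⟨fun k hk => ?_, main⟩
  rcases Nat.lt_or_ge N k with hlt | hge
  · have : k = N + 1 := by omega
    subst this
    obtain ⟨w, hw⟩ := hB.1
    have h1 := (main w hw).1
    have h2 := mul_pos hBpos (hppN N le_rfl)
    exact pos_of_mul_pos_right (h2.trans_le h1) (hsp _ (erase_subset _ _)).le
  · exact hppN k hge

/-- Among connected graphs on `N` vertices the path has the largest values. -/
lemma conn_le_path {G : SimpleGraph V} {x : ℝ} (hx : x < 0) (N : ℕ) : ∀ B : Finset V,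
    B.card = N → Conn G B → SP G x B → ip G B x ≤ pp x (N + 1) ∧
      (ip G B x = pp x (N + 1) → ∃ f : ℕ → V, B = (range N).image f ∧ PathSeq G f N) := by
  induction N with
  | zero => intro B hc hB; have := hB.1.card_pos; omega
  | succ m ih =>
    intro B hc hB hsp
    obtain ⟨hp, hk⟩ := key hx (m + 1) B hc hB hsp
    have hw : ∃ w ∈ B, ip G (B.erase w) x ≤ pp x (m + 1) := by
      rcases Nat.lt_or_ge B.card 2 with h2 | h2
      · obtain ⟨w, hw⟩ := hB.1
        have : B.erase w = ∅ := by
          rw [← card_eq_zero, card_erase_of_mem hw]; omega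
        have hm : m = 0 := by have := hB.1.card_pos; omega
        exact ⟨w, hw, by rw [this, hm]; simp [pp]⟩
      · obtain ⟨w, hw, hcw⟩ := conn_noncut hB h2
        exact ⟨w, hw, (ih (B.erase w) (by rw [card_erase_of_mem hw]; omega) hcw
          (hsp.mono (erase_subset _ _))).1⟩
    obtain ⟨w, hw, hle⟩ := hw
    obtain ⟨h1, h2⟩ := hk w hw
    have p1 := hp (m + 1) (by omega)
    have p2 := hp (m + 1 + 1) (by omega)
    have h3 := mul_le_mul_of_nonneg_right hle p2.le
    refine ⟨le_of_mul_le_mul_right (by linarith) p1, fun heq => ?_⟩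
    obtain ⟨f, -, hf⟩ := h2 (le_antisymm h1 (by rw [heq]; linarith))
    exact ⟨f, hf⟩

/-- Removing any set `S` of vertices from a connected set multiplies the value of the independence
polynomial by at least as much as shortening the path on the same number of vertices by `|S|`. -/
lemma conn_remove {G : SimpleGraph V} {x : ℝ} (hx : x < 0) (N : ℕ) : ∀ B : Finset V,
    B.card = N → Conn G B → SP G x B → ∀ S ⊆ B,
      ip G B x * pp x (N - S.card + 1) ≤ ip G (B \ S) x * pp x (N + 1) := by
  classical
  induction N using Nat.strong_induction_on with
  | _ N ih =>
  intro B hc hB hsp S hS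
  obtain ⟨hp, hk⟩ := key hx N B hc hB hsp
  rcases S.eq_empty_or_nonempty with rfl | ⟨s, hs⟩
  · simp
  rcases Nat.lt_or_ge B.card 2 with h2 | h2
  · have hb1 := hB.1.card_pos
    have hN : N = 1 := by omega
    subst hN
    have hSB : S = B := eq_of_subset_of_card_le hS (by have := card_pos.2 ⟨s, hs⟩; omega)
    have h1 := (hk s (hS hs)).1
    have he : B.erase s = ∅ := by rw [← card_eq_zero, card_erase_of_mem (hS hs)]; omega
    rw [he] at h1
    rw [hSB, sdiff_self, hc]
    simpa [pp] using h1
  -- Choose `v ∈ S` and a connected `C` avoiding `v` with `|C|` maximal. Then `C` is a component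
  -- of `B - v` containing the rest of `S`.
  let P : Finset (V × Finset V) :=
    (S ×ˢ B.powerset).filter (fun p => p.1 ∉ p.2 ∧ Conn G p.2)
  have hPne : P.Nonempty := by
    obtain ⟨t, ht, hts⟩ : ∃ t ∈ B, t ≠ s := exists_mem_ne (by omega) s
    refine ⟨(s, {t}), mem_filter.2 ⟨mem_product.2 ⟨hs, ?_⟩, ?_, conn_singleton G t⟩⟩
    · exact mem_powerset.2 (singleton_subset_iff.2 ht)
    · simpa using hts.symm
  obtain ⟨⟨v, C⟩, hvC, hmax⟩ := exists_max_image P (fun p => p.2.card) hPne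
  simp only [P, mem_filter, mem_product, mem_powerset] at hvC hmax
  obtain ⟨⟨hvS, hCB⟩, hvC', hC⟩ := hvC
  have hvB := hS hvS
  have hno : ∀ u ∈ C, ∀ z ∈ B.erase v, z ∉ C → ¬ G.Adj u z := by
    intro u hu z hz hzC huz
    have := hmax (v, insert z C) ⟨⟨hvS, insert_subset (mem_erase.1 hz).2 hCB⟩,
      by simp [hvC', (mem_erase.1 hz).1.symm], conn_insert hC hu huz⟩
    simp only [card_insert_of_notMem hzC] at this
    omega
  have hSC : S.erase v ⊆ C := by
    intro z hz
    by_contra hzC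
    obtain ⟨u, hu, t, ht, htC, hut⟩ := hB.2 C hCB hC.1 (fun e => hvC' (e ▸ hvB))
    have htv : t = v := by
      by_contra htv
      exact hno u hu t (mem_erase.2 ⟨htv, ht⟩) htC hut
    subst htv
    have := hmax (z, insert t C) ⟨⟨(mem_erase.1 hz).2, insert_subset hvB hCB⟩,
      by simp [hzC, (mem_erase.1 hz).1], conn_insert hC hu hut⟩
    simp only [card_insert_of_notMem hvC'] at this
    omega
  have hCA : C ⊆ B.erase v := fun z hz =>
    mem_erase.2 ⟨fun e => hvC' (e ▸ hz), hCB hz⟩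
  have hB' : Conn G (insert v (B.erase v)) := by rwa [insert_erase hvB]
  have hvA := notMem_erase v B
  have hc₁ := conn_part hB' hvA hCA hno
  have hc₂ := conn_part hB' hvA (sdiff_subset (s := B.erase v) (t := C)) (by
    intro u hu z hz hz' huz
    have : z ∈ C := by
      by_contra h; exact hz' (mem_sdiff.2 ⟨hz, h⟩)
    exact hno z this u (mem_sdiff.1 hu).1 (mem_sdiff.1 hu).2 huz.symm)
  have hdis : Disjoint C (B.erase v \ C) := disjoint_sdiff
  have hun : C ∪ (B.erase v \ C) = B.erase v := union_sdiff_of_subset hCA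
  have hno' : ∀ a ∈ C, ∀ b ∈ B.erase v \ C, ¬ G.Adj a b := fun a ha b hb =>
    hno a ha b (mem_sdiff.1 hb).1 (mem_sdiff.1 hb).2
  have hrest : B \ S = (C \ S.erase v) ∪ (B.erase v \ C) := by
    ext z
    simp only [mem_sdiff, mem_union, mem_erase]
    have h1 : z ∈ C → z ∈ B := fun h => hCB h
    have h2 : z ∈ C → z ≠ v := fun h e => hvC' (e ▸ h)
    have h3 : z ≠ v → z ∈ S → z ∈ C := fun h h' => hSC (mem_erase.2 ⟨h, h'⟩)
    have h4 : z = v → z ∈ S := fun h => h ▸ hvS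
    tauto
  have hcard := card_union_of_disjoint hdis
  rw [hun, card_erase_of_mem hvB, hc] at hcard
  have hw₂ : v ∉ B.erase v \ C := fun h => hvA (mem_sdiff.1 h).1
  have hsB : B.erase v ⊆ B := erase_subset _ _
  have hpw : insert v (B.erase v) = B := insert_erase hvB
  generalize B.erase v \ C = D at *
  have hDB : D ⊆ B := (hun ▸ subset_union_right).trans hsB
  have hCpos := hC.1.card_pos
  have hIH := ih C.card (by omega) C rfl hC (hsp.mono hCB) (S.erase v) hSC
  have r₁ := key hx (C.card + 1) (insert v C) (card_insert_of_notMem hvC') hc₁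
    (hsp.mono (insert_subset hvB hCB))
  have r₂ := key hx (D.card + 1) (insert v D) (card_insert_of_notMem hw₂) hc₂
    (hsp.mono (insert_subset hvB hDB))
  have t₁ := (r₁.2 v (mem_insert_self _ _)).1
  have t₂ := (r₂.2 v (mem_insert_self _ _)).1
  rw [erase_insert hvC'] at t₁
  rw [erase_insert hw₂] at t₂
  have hK := combine (m₁ := C.card) (m₂ := D.card) hx hvC' hw₂ hdis hno'
    (hsp.mono (union_subset hCB hDB)) (fun k hk => r₁.1 k (by omega))
    (fun k hk => r₂.1 k (by omega)) t₁ t₂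
  rw [hun, hpw, ← hun, ip_union G x C D hdis hno',
    show C.card + D.card + 2 = N + 1 by omega] at hK
  rw [hrest, ip_union G x (C \ S.erase v) D (hdis.mono_left sdiff_subset)
    (fun a ha b hb => hno' a (mem_sdiff.1 ha).1 b hb)]
  have hSc := card_erase_of_mem hvS
  have hScp := card_pos.2 ⟨s, hs⟩
  have hScC := card_le_card hSC
  have hsm := pp_submul (x := x) (C.card - (S.erase v).card) D.card
    (fun k hk => hp k (by omega))
  rw [show C.card - (S.erase v).card + D.card + 1 = N - S.card + 1 by omega] at hsm
  generalize C.card - (S.erase v).card + 1 = i at *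
  have pC := hp (C.card + 1) (by omega)
  have pD := hp (D.card + 1) (by omega)
  have pN := hp (N + 1) le_rfl
  have pi := hp (N - S.card + 1) (by omega)
  have iD := hsp D hDB
  have iB := hsp B (Subset.refl _)
  have ippos : 0 < pp x i := by
    by_contra h
    have : pp x i * pp x (D.card + 1) ≤ 0 := mul_nonpos_of_nonpos_of_nonneg (not_lt.1 h) pD.le
    linarith
  refine le_of_mul_le_mul_right ?_ pC
  calc ip G B x * pp x (N - S.card + 1) * pp x (C.card + 1)
      ≤ ip G B x * (pp x i * pp x (D.card + 1)) * pp x (C.card + 1) := by gcongr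
    _ = ip G B x * (pp x (C.card + 1) * pp x (D.card + 1)) * pp x i := by ring
    _ ≤ ip G C x * ip G D x * pp x (N + 1) * pp x i := by gcongr
    _ = ip G C x * pp x i * (ip G D x * pp x (N + 1)) := by ring
    _ ≤ ip G (C \ S.erase v) x * pp x (C.card + 1) * (ip G D x * pp x (N + 1)) := by gcongr
    _ = ip G (C \ S.erase v) x * ip G D x * pp x (N + 1) * pp x (C.card + 1) := by ring

end Paths

/-! ### Cycles, and paths with a chord -/

section Cycles

set_option linter.unusedSectionVars false

variable {V : Type*} [DecidableEq V] [Fintype V]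

lemma cycleGraph_adj_val {n : ℕ} (hn : 3 ≤ n) (u v : Fin n) : (cycleGraph n).Adj u v ↔
    u.val + 1 = v.val ∨ v.val + 1 = u.val ∨ (u.val = 0 ∧ v.val + 1 = n) ∨
      (v.val = 0 ∧ u.val + 1 = n) := by
  rw [cycleGraph_adj']
  have hu := u.isLt
  have hv := v.isLt
  rcases lt_trichotomy u v with h | h | h
  · rw [Fin.sub_val_of_le h.le, Fin.coe_sub_iff_lt.2 h]
    have : u.val < v.val := h
    omega
  · subst h
    rw [Fin.sub_val_of_le le_rfl]
    omega
  · rw [Fin.sub_val_of_le h.le, Fin.coe_sub_iff_lt.2 h]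
    have : v.val < u.val := h
    omega

lemma ip_cycleGraph {n : ℕ} (hn : 4 ≤ n) (x : ℝ) :
    ip (cycleGraph n) univ x = pp x (n + 1) - x ^ 2 * pp x (n - 3) := by
  obtain ⟨m, rfl⟩ : ∃ m, n = m + 4 := ⟨n - 4, by omega⟩
  have hadj := cycleGraph_adj_val (n := m + 4) (by omega)
  let f : ℕ → Fin (m + 4) := fun i => ⟨(i + 1) % (m + 4), Nat.mod_lt _ (by omega)⟩
  let g : ℕ → Fin (m + 4) := fun i => ⟨(i + 2) % (m + 4), Nat.mod_lt _ (by omega)⟩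
  have hf : ∀ i < m + 3, (f i).val = i + 1 := fun i hi => Nat.mod_eq_of_lt (by omega)
  have hg : ∀ i < m + 1, (g i).val = i + 2 := fun i hi => Nat.mod_eq_of_lt (by omega)
  have pf : PathSeq (cycleGraph (m + 4)) f (m + 3) := by
    intro i hi j hj
    rw [hadj, Fin.ext_iff, hf i hi, hf j hj]
    omega
  have pg : PathSeq (cycleGraph (m + 4)) g (m + 1) := by
    intro i hi j hj
    rw [hadj, Fin.ext_iff, hg i hi, hg j hj]
    omega
  have ef : (univ.erase 0 : Finset (Fin (m + 4))) = (range (m + 3)).image f := by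
    ext z
    simp only [mem_erase, mem_univ, and_true, mem_image, mem_range, ne_eq, Fin.ext_iff,
      Fin.val_zero]
    constructor
    · intro h
      have hz := z.isLt
      exact ⟨z.val - 1, by omega, by rw [hf _ (by omega)]; omega⟩
    · rintro ⟨i, hi, h⟩
      rw [hf i hi] at h
      omega
  have eg : avoid (cycleGraph (m + 4)) 0 (univ.erase 0) = (range (m + 1)).image g := by
    ext z
    have hadj0 : (cycleGraph (m + 4)).Adj 0 z ↔ z.val = 1 ∨ z.val = m + 3 := by
      rw [hadj, Fin.val_zero]
      omega
    simp only [mem_avoid, mem_erase, mem_univ, and_true, mem_image, mem_range, ne_eq,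
      Fin.ext_iff, hadj0, Fin.val_zero]
    have hz := z.isLt
    constructor
    · intro h
      exact ⟨z.val - 2, by omega, by rw [hg _ (by omega)]; omega⟩
    · rintro ⟨i, hi, h⟩
      rw [hg i hi] at h
      omega
  rw [ip_erase _ (mem_univ (0 : Fin (m + 4))), eg, pg.ip_eq, ef, pf.ip_eq,
    show m + 4 - 3 = m + 1 by omega, pp_succ_succ x (m + 3), pp_succ_succ x (m + 1)]
  ring

lemma iso_of_fin {G : SimpleGraph V} {n : ℕ} (hcard : Fintype.card V = n) (f : Fin n → V)
    (hinj : Function.Injective f) (K : SimpleGraph (Fin n))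
    (h : ∀ k l, G.Adj (f k) (f l) ↔ K.Adj k l) : Nonempty (G ≃g K) := by
  have hb : Function.Bijective f :=
    (Fintype.bijective_iff_injective_and_card f).2 ⟨hinj, by simp [hcard]⟩
  exact ⟨(⟨Equiv.ofBijective f hb, fun {a b} => h a b⟩ : K ≃g G).symm⟩

lemma five_le_card {M : Finset V} {f : ℕ → V} {n : ℕ}
    (hf : ∀ i < n, ∀ j < n, f i = f j → i = j) {a b c d e : ℕ} (h1 : a < b) (h2 : b < c)
    (h3 : c < d) (h4 : d < e) (h5 : e < n) (ha : f a ∈ M) (hb : f b ∈ M) (hc : f c ∈ M)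
    (hd : f d ∈ M) (he : f e ∈ M) : 5 ≤ M.card := by
  have hsub : ({a, b, c, d, e} : Finset ℕ).image f ⊆ M := by
    intro z hz
    simp only [mem_image, mem_insert, mem_singleton] at hz
    obtain ⟨i, (rfl | rfl | rfl | rfl | rfl), rfl⟩ := hz <;> assumption
  have hc' : (({a, b, c, d, e} : Finset ℕ).image f).card = 5 := by
    rw [card_image_of_injOn]
    · repeat rw [card_insert_of_notMem (by simp; omega)]
      simp
    · intro i hi j hj hij
      simp only [coe_insert, coe_singleton, Set.mem_insert_iff, Set.mem_singleton_iff] at hi hj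
      exact hf i (by omega) j (by omega) hij
  rw [← hc']
  exact card_le_card hsub

/-- A graph consisting of a Hamiltonian path and one chord is `C_n`, or `D_n`, or the closed
neighbourhoods of the ends of the chord cover at least five vertices. -/
lemma chord_cases {G : SimpleGraph V} {n : ℕ} (hn : 4 ≤ n) (hcard : Fintype.card V = n)
    {f : ℕ → V} (hf : ∀ i < n, ∀ j < n, f i = f j → i = j) {i j : ℕ} (hij : i + 2 ≤ j)
    (hj : j < n) (hadj : ∀ k < n, ∀ l < n, (G.Adj (f k) (f l) ↔
      k + 1 = l ∨ l + 1 = k ∨ (k = i ∧ l = j) ∨ (k = j ∧ l = i)))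
    (hC : ¬ Nonempty (G ≃g cycleGraph n)) (hD : ¬ Nonempty (G ≃g Dgraph n)) {M : Finset V}
    (hM : ∀ z, G.Adj (f i) z ∨ G.Adj (f j) z → z ∈ M) : 5 ≤ M.card := by
  have hinj : Function.Injective (fun k : Fin n => f k.val) := fun a b hab =>
    Fin.ext (hf a a.isLt b b.isLt hab)
  have hMk : ∀ k < n, (i + 1 = k ∨ k + 1 = i ∨ k = j ∨ k = i ∨ j + 1 = k ∨ k + 1 = j) →
      f k ∈ M := by
    intro k hk h
    refine hM _ ?_
    rw [hadj i (by omega) k hk, hadj j hj k hk]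
    omega
  by_cases c1 : i = 0 ∧ j + 1 = n
  · refine absurd (iso_of_fin hcard _ hinj _ fun k l => ?_) hC
    rw [cycleGraph_adj_val (by omega), hadj k k.isLt l l.isLt]
    omega
  by_cases c2 : i = 0 ∧ j = 2
  · refine absurd (iso_of_fin hcard _ hinj _ fun k l => ?_) hD
    rw [hadj k k.isLt l l.isLt, Dgraph, fromRel_adj, ne_eq, Fin.ext_iff]
    omega
  by_cases c3 : i + 3 = n ∧ j + 1 = n
  · -- The chord is at the far end of the path, which has to be reversed.
    have hinj' : Function.Injective (fun k : Fin n => f (n - 1 - k.val)) := by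
      intro a b hab
      have ha := a.isLt
      have hb := b.isLt
      have := hf _ (by omega) _ (by omega) hab
      exact Fin.ext (by omega)
    refine absurd (iso_of_fin hcard _ hinj' _ fun k l => ?_) hD
    have hk := k.isLt
    have hl := l.isLt
    rw [hadj _ (by omega) _ (by omega), Dgraph, fromRel_adj, ne_eq, Fin.ext_iff]
    omega
  by_cases h0 : i = 0
  · subst h0
    exact five_le_card hf (a := 0) (b := 1) (c := j - 1) (d := j) (e := j + 1) (by omega)
      (by omega) (by omega) (by omega) (by omega) (hMk _ (by omega) (by omega))
      (hMk _ (by omega) (by omega)) (hMk _ (by omega) (by omega)) (hMk _ (by omega) (by omega))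
      (hMk _ (by omega) (by omega))
  by_cases h1 : j + 1 = n
  · exact five_le_card hf (a := i - 1) (b := i) (c := i + 1) (d := j - 1) (e := j) (by omega)
      (by omega) (by omega) (by omega) (by omega) (hMk _ (by omega) (by omega))
      (hMk _ (by omega) (by omega)) (hMk _ (by omega) (by omega)) (hMk _ (by omega) (by omega))
      (hMk _ (by omega) (by omega))
  · exact five_le_card hf (a := i - 1) (b := i) (c := i + 1) (d := j) (e := j + 1) (by omega)
      (by omega) (by omega) (by omega) (by omega) (hMk _ (by omega) (by omega))
      (hMk _ (by omega) (by omega)) (hMk _ (by omega) (by omega)) (hMk _ (by omega) (by omega))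
      (hMk _ (by omega) (by omega))

/-- The comparison with `C_n`, given an edge `ab` whose deletion leaves `G` connected and whose
ends have at least four vertices in their closed neighbourhoods. -/
lemma lt_cycle_aux {G H : SimpleGraph V} {n : ℕ} (hn : 4 ≤ n) (hcard : Fintype.card V = n)
    (hC : ¬ Nonempty (G ≃g cycleGraph n)) (hD : ¬ Nonempty (G ≃g Dgraph n)) {a b : V}
    (hab : G.Adj a b) (hH : ∀ u v, H.Adj u v ↔ G.Adj u v ∧ s(u, v) ≠ s(a, b))
    (hconn : Conn H univ)
    (hM : 4 ≤ (univ \ avoid G b (avoid G a (univ.erase a))).card)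
    {x : ℝ} (hx : x < 0) (hsp : SP G x univ) :
    ip G univ x < ip (cycleGraph n) univ x := by
  have hcu : (univ : Finset V).card = n := by rw [card_univ, hcard]
  have hspH : SP H x univ := by
    intro S _
    by_cases hS : a ∈ S ∧ b ∈ S
    · rw [ip_deleteEdge hab hH hS.1 hS.2]
      have h1 := hsp S (subset_univ _)
      have h2 := hsp (avoid G b (avoid G a (S.erase a))) (subset_univ _)
      positivity
    · rw [ip_congr (H := G)]
      · exact hsp S (subset_univ _)
      · intro u hu v hv
        rw [hH]
        refine and_iff_left ?_
        rw [ne_eq, Sym2.eq_iff]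
        rintro (⟨rfl, rfl⟩ | ⟨rfl, rfl⟩)
        · exact hS ⟨hu, hv⟩
        · exact hS ⟨hv, hu⟩
  have hdel := ip_deleteEdge hab hH (mem_univ a) (mem_univ b) x
  have hMmem : ∀ z, z ∈ univ \ avoid G b (avoid G a (univ.erase a)) ↔
      z = a ∨ G.Adj a z ∨ G.Adj b z := by
    intro z
    simp only [mem_sdiff, mem_univ, mem_avoid, mem_erase, true_and, and_true]
    tauto
  have hcompl : univ \ (univ \ avoid G b (avoid G a (univ.erase a))) =
      avoid G b (avoid G a (univ.erase a)) := by simp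
  have hL := conn_remove hx n univ hcu hconn hspH _ (sdiff_subset
    (s := univ) (t := avoid G b (avoid G a (univ.erase a))))
  rw [hcompl] at hL
  have hHG : ip H (avoid G b (avoid G a (univ.erase a))) x =
      ip G (avoid G b (avoid G a (univ.erase a))) x := by
    refine ip_congr (fun u hu v hv => ?_) x
    have h1 : u ≠ a := by simp only [mem_avoid, mem_erase] at hu; exact hu.1.1.1
    have h2 : v ≠ a := by simp only [mem_avoid, mem_erase] at hv; exact hv.1.1.1
    rw [hH]
    refine and_iff_left ?_
    rw [ne_eq, Sym2.eq_iff]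
    tauto
  rw [hHG] at hL
  obtain ⟨hp, -⟩ := key hx n univ hcu hconn hspH
  obtain ⟨hle, hpath⟩ := conn_le_path hx n univ hcu hconn hspH
  have hMn : (univ \ avoid G b (avoid G a (univ.erase a))).card ≤ n := by
    rw [← hcu]; exact card_le_card (subset_univ _)
  have hGpos := hsp univ (Subset.refl _)
  have hHpos := hspH univ (Subset.refl _)
  have hx2 : 0 < x ^ 2 := by nlinarith [mul_pos_of_neg_of_neg hx hx]
  have hpn := hp (n + 1) le_rfl
  have hp3 := hp (n - 3) (by omega)
  have hfive : (∃ f : ℕ → V, (univ : Finset V) = (range n).image f ∧ PathSeq H f n) →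
      5 ≤ (univ \ avoid G b (avoid G a (univ.erase a))).card := by
    rintro ⟨f, hfu, hf⟩
    have hinj : ∀ i < n, ∀ j < n, f i = f j → i = j := fun i hi j hj => (hf i hi j hj).1
    have hsurj : ∀ z, ∃ i < n, f i = z := by
      intro z
      have := mem_univ z
      rw [hfu] at this
      simpa using this
    obtain ⟨i, hi, rfl⟩ := hsurj a
    obtain ⟨j, hj, rfl⟩ := hsurj b
    have hnot : ¬ H.Adj (f i) (f j) := fun h => ((hH _ _).1 h).2 rfl
    rw [(hf i hi j hj).2] at hnot
    have hne : i ≠ j := by rintro rfl; exact hab.ne rfl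
    have hadj : ∀ k < n, ∀ l < n, (G.Adj (f k) (f l) ↔
        k + 1 = l ∨ l + 1 = k ∨ (k = i ∧ l = j) ∨ (k = j ∧ l = i)) := by
      intro k hk l hl
      have h1 := hH (f k) (f l)
      rw [(hf k hk l hl).2] at h1
      have h2 : s(f k, f l) = s(f i, f j) ↔ (k = i ∧ l = j) ∨ (k = j ∧ l = i) := by
        rw [Sym2.eq_iff]
        constructor
        · rintro (⟨e1, e2⟩ | ⟨e1, e2⟩)
          · exact Or.inl ⟨hinj _ hk _ hi e1, hinj _ hl _ hj e2⟩
          · exact Or.inr ⟨hinj _ hk _ hj e1, hinj _ hl _ hi e2⟩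
        · rintro (⟨rfl, rfl⟩ | ⟨rfl, rfl⟩)
          · exact Or.inl ⟨rfl, rfl⟩
          · exact Or.inr ⟨rfl, rfl⟩
      have h3 : (k = i ∧ l = j) ∨ (k = j ∧ l = i) → G.Adj (f k) (f l) := by
        rintro (⟨rfl, rfl⟩ | ⟨rfl, rfl⟩)
        · exact hab
        · exact hab.symm
      rw [ne_eq, h2] at h1
      constructor
      · intro h
        by_cases hc : (k = i ∧ l = j) ∨ (k = j ∧ l = i)
        · exact Or.inr (Or.inr hc)
        · rcases h1.2 ⟨h, hc⟩ with h | h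
          exacts [Or.inl h, Or.inr (Or.inl h)]
      · rintro (h | h | h)
        exacts [(h1.1 (Or.inl h)).1, (h1.1 (Or.inr h)).1, h3 h]
    rcases Nat.lt_or_ge i j with hlt | hge
    · exact chord_cases hn hcard hinj (i := i) (j := j) (by omega) hj hadj hC hD
        (fun z hz => (hMmem z).2 (Or.inr hz))
    · exact chord_cases hn hcard hinj (i := j) (j := i) (by omega) hi
        (fun k hk l hl => by rw [hadj k hk l hl, or_comm (a := k = i ∧ l = j)]) hC hD
        (fun z hz => (hMmem z).2 (Or.inr hz.symm))
  rw [ip_cycleGraph hn]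
  generalize (univ \ avoid G b (avoid G a (univ.erase a))).card = M at *
  generalize ip G (avoid G b (avoid G a (univ.erase a))) x = R at *
  generalize hI : ip G univ x = I at *
  generalize hJ : ip H univ x = J at *
  have hmono : pp x (n - 3) ≤ pp x (n - M + 1) := by
    rcases Nat.lt_or_ge (n - M + 1) (n - 3) with h | h
    · exact (pp_lt hx hp (by omega) h (by omega)).le
    · rw [show n - M + 1 = n - 3 by omega]
  -- `I(G) pp(n+1) ≤ I(H) c_n ≤ pp(n+1) c_n`, and one of the two inequalities is strict.
  have s1 : J * pp x (n - 3) ≤ R * pp x (n + 1) :=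
    (mul_le_mul_of_nonneg_left hmono hHpos.le).trans hL
  have s2 : I * pp x (n + 1) ≤ J * (pp x (n + 1) - x ^ 2 * pp x (n - 3)) := by
    have := mul_le_mul_of_nonneg_left s1 hx2.le
    nlinarith
  have hcpos : 0 < pp x (n + 1) - x ^ 2 * pp x (n - 3) :=
    pos_of_mul_pos_right ((mul_pos hGpos hpn).trans_le s2) hHpos.le
  have s3 := mul_le_mul_of_nonneg_right hle hcpos.le
  refine lt_of_mul_lt_mul_right ?_ hpn.le
  rcases hle.lt_or_eq with hlt | heq
  · have := mul_lt_mul_of_pos_right hlt hcpos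
    nlinarith
  · have h5 := hfive (hpath heq)
    have hstr : pp x (n - 3) < pp x (n - M + 1) :=
      pp_lt hx hp (by omega) (by omega) (by omega)
    have s4 : J * pp x (n - 3) < R * pp x (n + 1) :=
      (mul_lt_mul_of_pos_left hstr hHpos).trans_le hL
    have := mul_lt_mul_of_pos_left s4 hx2
    nlinarith

lemma conn_of_connected {G : SimpleGraph V} (h : G.Connected) : Conn G univ := by
  have := h.nonempty
  refine ⟨univ_nonempty, fun B _ hne hne' => ?_⟩
  obtain ⟨u, hu⟩ := hne
  obtain ⟨v, hv⟩ : ∃ v, v ∉ B := by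
    by_contra hc
    push Not at hc
    exact hne' (eq_univ_iff_forall.2 hc)
  obtain ⟨p⟩ := h.preconnected u v
  obtain ⟨d, -, hd1, hd2⟩ := p.exists_boundary_dart (B : Set V) (by simpa) (by simpa)
  exact ⟨d.fst, by simpa using hd1, d.snd, mem_univ _, by simpa using hd2, d.adj⟩

lemma exists_nonbridge {G : SimpleGraph V} (hG : Unicyclic G) :
    ∃ a b, G.Adj a b ∧ Conn (G.deleteEdges {s(a, b)}) univ := by
  classical
  have hnt : ¬ G.IsAcyclic := by
    intro hac
    have h1 := IsTree.card_edgeFinset (G := G) ⟨hG.1, hac⟩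
    have h2 := hG.2
    rw [Set.ncard_eq_toFinset_card'] at h2
    change G.edgeFinset.card = _ at h2
    omega
  rw [isAcyclic_iff_forall_adj_isBridge] at hnt
  push Not at hnt
  obtain ⟨a, b, hab, hbr⟩ := hnt
  exact ⟨a, b, hab, conn_of_connected (hG.1.connected_delete_edge_of_not_isBridge hbr)⟩

lemma four_le_card {M : Finset V} {a b c d : V} (ha : a ∈ M) (hb : b ∈ M) (hc : c ∈ M)
    (hd : d ∈ M) (h1 : a ≠ b) (h2 : a ≠ c) (h3 : a ≠ d) (h4 : b ≠ c) (h5 : b ≠ d)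
    (h6 : c ≠ d) : 4 ≤ M.card := by
  have hsub : ({a, b, c, d} : Finset V) ⊆ M := by
    intro z hz
    simp only [mem_insert, mem_singleton] at hz
    obtain (rfl | rfl | rfl | rfl) := hz <;> assumption
  have : ({a, b, c, d} : Finset V).card = 4 := by
    repeat rw [card_insert_of_notMem (by simp [*])]
    simp
  rw [← this]
  exact card_le_card hsub

lemma lt_cycle {G : SimpleGraph V} {n : ℕ} (hn : 3 ≤ n) (hcard : Fintype.card V = n)
    (hG : Unicyclic G) (hC : ¬ Nonempty (G ≃g cycleGraph n))
    (hD : 4 ≤ n → ¬ Nonempty (G ≃g Dgraph n)) {x : ℝ} (hx : x < 0) (hsp : SP G x univ) :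
    ip G univ x < ip (cycleGraph n) univ x := by
  obtain ⟨a, b, hab, hcon⟩ := exists_nonbridge hG
  have hH : ∀ u v, (G.deleteEdges {s(a, b)}).Adj u v ↔ G.Adj u v ∧ s(u, v) ≠ s(a, b) := by
    intro u v; simp [deleteEdges_adj]
  have hMmem : ∀ a b z, z ∈ univ \ avoid G b (avoid G a (univ.erase a)) ↔
      z = a ∨ G.Adj a z ∨ G.Adj b z := by
    intro a b z
    simp only [mem_sdiff, mem_univ, mem_avoid, mem_erase, true_and, and_true]
    tauto
  by_cases hM : 4 ≤ (univ \ avoid G b (avoid G a (univ.erase a))).card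
  · have h4 : 4 ≤ n := by
      rw [← hcard, ← card_univ]; exact hM.trans (card_le_card (subset_univ _))
    exact lt_cycle_aux h4 hcard hC (hD h4) hab hH hcon hM hx hsp
  -- Otherwise `a` and `b` have degree two and lie on a triangle `abc`.
  have hne := hab.ne
  have nbr : ∀ a' b', (a' = a ∧ b' = b) ∨ (a' = b ∧ b' = a) →
      ∃ c, G.Adj a' c ∧ c ≠ a ∧ c ≠ b := by
    intro a' b' hh
    obtain ⟨u, hu, v, -, hv, huv⟩ := hcon.2 {a'} (subset_univ _) (singleton_nonempty _) (by
      intro e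
      have : b' ∈ ({a'} : Finset V) := by rw [e]; exact mem_univ _
      rw [mem_singleton] at this
      rcases hh with ⟨rfl, rfl⟩ | ⟨rfl, rfl⟩
      · exact hne this.symm
      · exact hne this)
    rw [mem_singleton] at hu hv
    subst hu
    obtain ⟨h1, h2⟩ := (hH _ _).1 huv
    rcases hh with ⟨rfl, rfl⟩ | ⟨rfl, rfl⟩
    · exact ⟨v, h1, hv, fun e => h2 (by rw [e])⟩
    · exact ⟨v, h1, fun e => h2 (by rw [e, Sym2.eq_swap]), hv⟩
  obtain ⟨c, hac, hca, hcb⟩ := nbr a b (Or.inl ⟨rfl, rfl⟩)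
  obtain ⟨c', hbc, hca', hcb'⟩ := nbr b a (Or.inr ⟨rfl, rfl⟩)
  have hcc : c' = c := by
    by_contra hcc
    exact hM (four_le_card (a := a) (b := b) (c := c) (d := c') ((hMmem _ _ _).2 (by simp))
      ((hMmem _ _ _).2 (by simp [hab])) ((hMmem _ _ _).2 (by simp [hac]))
      ((hMmem _ _ _).2 (by simp [hbc])) hne hca.symm hca'.symm hcb.symm hcb'.symm
      (Ne.symm hcc))
  subst hcc
  rcases Nat.lt_or_ge n 4 with hn3 | hn4
  · exfalso
    have : n = 3 := by omega
    subst this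
    have htop : G = ⊤ := by
      have hu : ({a, b, c'} : Finset V) = univ := by
        refine eq_univ_of_card _ ?_
        rw [hcard, card_eq_three]
        exact ⟨a, b, c', hne, hca.symm, hcb.symm, rfl⟩
      ext u v
      have h1 := hu ▸ mem_univ u
      have h2 := hu ▸ mem_univ v
      simp only [mem_insert, mem_singleton] at h1 h2
      rw [top_adj]
      refine ⟨fun h => h.ne, fun h => ?_⟩
      rcases h1 with rfl | rfl | rfl <;> rcases h2 with rfl | rfl | rfl <;>
        first | exact absurd rfl h | assumption | (apply SimpleGraph.Adj.symm; assumption)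
    refine hC ⟨?_⟩
    rw [htop, cycleGraph_three_eq_top]
    exact Iso.completeGraph (Fintype.equivFinOfCardEq hcard)
  · obtain ⟨u, hu, d, -, hd, hud⟩ := (conn_of_connected hG.1).2 {a, b, c'} (subset_univ _)
      (insert_nonempty _ _) (by
        intro e
        have h1 := card_le_three (a := a) (b := b) (c := c')
        rw [e, card_univ] at h1
        omega)
    simp only [mem_insert, mem_singleton, not_or] at hu hd
    obtain ⟨hda, hdb, hdc⟩ := hd
    have hucd : G.Adj c' d := by
      rcases hu with rfl | rfl | rfl
      · exact absurd (four_le_card (a := u) (b := b) (c := c') (d := d)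
          ((hMmem _ _ _).2 (by simp)) ((hMmem _ _ _).2 (by simp [hab]))
          ((hMmem _ _ _).2 (by simp [hac])) ((hMmem _ _ _).2 (by simp [hud])) hne hca.symm
          (Ne.symm hda) hcb.symm (Ne.symm hdb) (Ne.symm hdc)) hM
      · exact absurd (four_le_card (a := a) (b := u) (c := c') (d := d)
          ((hMmem _ _ _).2 (by simp)) ((hMmem _ _ _).2 (by simp [hab]))
          ((hMmem _ _ _).2 (by simp [hac])) ((hMmem _ _ _).2 (by simp [hud])) hne hca.symm
          (Ne.symm hda) hcb.symm (Ne.symm hdb) (Ne.symm hdc)) hM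
      · exact hud
    have hH' : ∀ u v, (G.deleteEdges {s(a, c')}).Adj u v ↔
        G.Adj u v ∧ s(u, v) ≠ s(a, c') := by
      intro u v; simp [deleteEdges_adj]
    have hcon' : Conn (G.deleteEdges {s(a, c')}) univ := by
      have hH1 : (G.deleteEdges {s(a, c')}).Adj a b := by
        rw [hH', ne_eq, Sym2.eq_iff]
        exact ⟨hab, by rintro (⟨-, h⟩ | ⟨h, -⟩); exacts [hcb h.symm, hca h.symm]⟩
      have hH2 : (G.deleteEdges {s(a, c')}).Adj b c' := by
        rw [hH', ne_eq, Sym2.eq_iff]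
        exact ⟨hbc, by rintro (⟨h, -⟩ | ⟨h, -⟩); exacts [hne h.symm, hcb h.symm]⟩
      refine ⟨univ_nonempty_iff.2 ⟨a⟩, fun B hB hBn hBu => ?_⟩
      obtain ⟨p, hp, q, -, hq, hpq⟩ := (conn_of_connected hG.1).2 B hB hBn hBu
      by_cases he : s(p, q) = s(a, c')
      · -- The crossing edge is `ac`; then `ab` or `bc` crosses as well.
        rw [Sym2.eq_iff] at he
        by_cases hbB : b ∈ B
        · rcases he with ⟨rfl, rfl⟩ | ⟨rfl, rfl⟩
          · exact ⟨b, hbB, q, mem_univ _, hq, hH2⟩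
          · exact ⟨b, hbB, q, mem_univ _, hq, hH1.symm⟩
        · rcases he with ⟨rfl, rfl⟩ | ⟨rfl, rfl⟩
          · exact ⟨p, hp, b, mem_univ _, hbB, hH1⟩
          · exact ⟨p, hp, b, mem_univ _, hbB, hH2.symm⟩
      · exact ⟨p, hp, q, mem_univ _, hq, (hH' p q).2 ⟨hpq, he⟩⟩
    refine lt_cycle_aux hn4 hcard hC (hD hn4) hac hH' hcon' ?_ hx hsp
    exact four_le_card (a := a) (b := b) (c := c') (d := d)
      ((hMmem _ _ _).2 (by simp)) ((hMmem _ _ _).2 (by simp [hab]))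
      ((hMmem _ _ _).2 (by simp [hac])) ((hMmem _ _ _).2 (by simp [hucd])) hne hca.symm
      (Ne.symm hda) hcb.symm (Ne.symm hdb) (Ne.symm hdc)

end Cycles

/-! ### Counting edges inside a vertex set -/

section Star

set_option linter.unusedSectionVars false

variable {V : Type*} [DecidableEq V]

open Classical in
/-- The neighbours of `v` inside `A`. -/
noncomputable def nb (G : SimpleGraph V) (v : V) (A : Finset V) : Finset V :=
  A.filter (fun u => G.Adj v u)

/-- The degree sum of the subgraph of `G` induced by `A`, that is, twice its number of edges. -/
noncomputable def dd (G : SimpleGraph V) (A : Finset V) : ℕ :=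
  ∑ u ∈ A, (nb G u A).card

@[simp] lemma mem_nb {G : SimpleGraph V} {v u : V} {A : Finset V} :
    u ∈ nb G v A ↔ u ∈ A ∧ G.Adj v u := by
  simp [nb]

lemma nb_subset (G : SimpleGraph V) (v : V) (A : Finset V) : nb G v A ⊆ A :=
  fun _ hu => (mem_nb.1 hu).1

lemma card_avoid_add (G : SimpleGraph V) (v : V) (A : Finset V) :
    (avoid G v A).card + (nb G v A).card = A.card := by
  classical
  unfold avoid nb
  rw [add_comm]
  exact card_filter_add_card_filter_not (fun u => G.Adj v u)

lemma dd_erase (G : SimpleGraph V) {A : Finset V} {w : V} (hw : w ∈ A) :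
    dd G A = dd G (A.erase w) + 2 * (nb G w (A.erase w)).card := by
  classical
  have h0 : nb G w A = nb G w (A.erase w) := by
    ext z
    simp only [mem_nb, mem_erase]
    exact ⟨fun h => ⟨⟨h.2.ne', h.1⟩, h.2⟩, fun h => ⟨h.1.2, h.2⟩⟩
  have h1 : ∀ u ∈ A.erase w, (nb G u A).card =
      (nb G u (A.erase w)).card + if G.Adj w u then 1 else 0 := by
    intro u _
    split_ifs with h
    · have : nb G u A = insert w (nb G u (A.erase w)) := by
        ext z
        simp only [mem_nb, mem_erase, mem_insert]
        by_cases hz : z = w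
        · subst hz; simp [hw, h.symm]
        · simp [hz]
      rw [this, card_insert_of_notMem (by simp)]
    · have : nb G u A = nb G u (A.erase w) := by
        ext z
        simp only [mem_nb, mem_erase]
        by_cases hz : z = w
        · subst hz; simp [G.adj_comm u z, h]
        · simp [hz]
      rw [this, add_zero]
  have h2 : (∑ u ∈ A.erase w, if G.Adj w u then 1 else 0) = (nb G w (A.erase w)).card := by
    unfold nb
    rw [card_filter]
  unfold dd
  rw [← add_sum_erase _ _ hw, sum_congr rfl h1, sum_add_distrib, h2, h0]
  ring

lemma dd_eq_zero {G : SimpleGraph V} {A : Finset V} (h : ∀ u ∈ A, ∀ v ∈ A, ¬ G.Adj u v) :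
    dd G A = 0 := by
  refine sum_eq_zero fun u hu => card_eq_zero.2 (eq_empty_of_forall_notMem fun v hv => ?_)
  exact h u hu v (mem_nb.1 hv).1 (mem_nb.1 hv).2

lemma dd_le (G : SimpleGraph V) (A : Finset V) : dd G A ≤ A.card * (A.card - 1) := by
  unfold dd
  rw [← smul_eq_mul]
  refine sum_le_card_nsmul _ _ _ fun u hu => ?_
  rw [← card_erase_of_mem hu]
  refine card_le_card fun v hv => ?_
  exact mem_erase.2 ⟨(mem_nb.1 hv).2.ne', (mem_nb.1 hv).1⟩

lemma one_le_nb {G : SimpleGraph V} {B : Finset V} (hB : Conn G B) (h2 : 2 ≤ B.card) {w : V}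
    (hw : w ∈ B) : 1 ≤ (nb G w (B.erase w)).card := by
  obtain ⟨u, hu, v, hv, hvw, huv⟩ := hB.2 {w} (singleton_subset_iff.2 hw)
    (singleton_nonempty _) (by rintro rfl; simp at h2)
  rw [mem_singleton] at hu hvw
  subst hu
  exact card_pos.2 ⟨v, mem_nb.2 ⟨mem_erase.2 ⟨hvw, hv⟩, huv⟩⟩

/-- A connected graph on `N` vertices has at least `N - 1` edges. -/
lemma le_dd {G : SimpleGraph V} : ∀ (N : ℕ) (B : Finset V), B.card = N → Conn G B →
    2 * N ≤ dd G B + 2 := by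
  intro N
  induction N with
  | zero => intro B _ _; omega
  | succ N ih =>
    intro B hcard hB
    rcases Nat.eq_zero_or_pos N with rfl | hN
    · omega
    obtain ⟨w, hw, hcw⟩ := conn_noncut hB (by omega)
    have h1 := ih (B.erase w) (by rw [card_erase_of_mem hw]; omega) hcw
    have h2 := one_le_nb hB (by omega) hw
    rw [dd_erase G hw]
    omega

lemma dd_univ [Fintype V] {G : SimpleGraph V} (hG : Unicyclic G) :
    dd G univ = 2 * Fintype.card V := by
  classical
  have h := G.sum_degrees_eq_twice_card_edges
  have h2 := hG.2
  rw [Set.ncard_eq_toFinset_card'] at h2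
  change G.edgeFinset.card = _ at h2
  rw [← h2, ← h]
  refine sum_congr rfl fun u _ => ?_
  rw [← card_neighborFinset_eq_degree]
  congr 1
  ext v
  simp

/-! ### Upper bounds by products -/

/-- Adding the vertices of `A` to `C` multiplies the value by at most `(1 + x) ^ |A|`, with
equality only if the added vertices are isolated. -/
lemma ip_union_le {G : SimpleGraph V} {x : ℝ} (hx : x < 0) (hx1 : -1 < x) (C A : Finset V)
    (hd : Disjoint C A) (hsp : SP G x (C ∪ A)) :
    ip G (C ∪ A) x ≤ ip G C x * (1 + x) ^ A.card ∧
      (ip G (C ∪ A) x = ip G C x * (1 + x) ^ A.card →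
        ∀ z ∈ A, ∀ y ∈ C ∪ A, ¬ G.Adj z y) := by
  induction A using Finset.induction_on with
  | empty => simp
  | insert z A hz ih =>
    have hzC : z ∉ C := fun h => disjoint_left.1 hd h (mem_insert_self _ _)
    have hzu : z ∉ C ∪ A := by simp [hz, hzC]
    have hsub : C ∪ A ⊆ C ∪ insert z A := union_subset_union_right (subset_insert _ _)
    obtain ⟨ih1, ih2⟩ := ih (hd.mono_right (subset_insert _ _)) (hsp.mono hsub)
    obtain ⟨a1, a2⟩ := (hsp.mono hsub).anti hx (avoid_subset G z (C ∪ A))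
    rw [union_insert, ip_insert G hzu, card_insert_of_notMem hz, pow_succ]
    have hpos := hsp _ hsub
    refine ⟨by nlinarith, fun heq => ?_⟩
    have e1 : avoid G z (C ∪ A) = C ∪ A := by
      by_contra hne
      have := a2 hne
      nlinarith
    have e2 : ip G (C ∪ A) x = ip G C x * (1 + x) ^ A.card := by
      rw [e1] at heq
      have : (1 + x) * (ip G (C ∪ A) x - ip G C x * (1 + x) ^ A.card) = 0 := by linarith
      rcases mul_eq_zero.1 this with h | h <;> linarith
    have hzn : ∀ y ∈ C ∪ A, ¬ G.Adj z y := fun y hy => (mem_avoid.1 (e1.symm ▸ hy)).2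
    intro t ht y hy hty
    rcases mem_insert.1 ht with rfl | ht'
    · rcases mem_insert.1 hy with rfl | hy'
      · exact hty.ne rfl
      · exact hzn y hy' hty
    · rcases mem_insert.1 hy with rfl | hy'
      · exact hzn t (mem_union_right _ ht') hty.symm
      · exact ih2 e2 t ht' y hy' hty

lemma ip_le_pow {G : SimpleGraph V} {x : ℝ} (hx : x < 0) (hx1 : -1 < x) {A : Finset V}
    (hsp : SP G x A) : ip G A x ≤ (1 + x) ^ A.card ∧
      (ip G A x = (1 + x) ^ A.card → ∀ z ∈ A, ∀ y ∈ A, ¬ G.Adj z y) := by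
  have := ip_union_le hx hx1 ∅ A (disjoint_empty_left _) (by simpa using hsp)
  simpa using this

lemma ip_pair {G : SimpleGraph V} {a b : V} (h : G.Adj a b) (x : ℝ) :
    ip G {a, b} x = 1 + 2 * x := by
  have e1 : avoid G a {b} = ∅ := by
    ext z; simp only [mem_avoid, mem_singleton, notMem_empty, iff_false]
    rintro ⟨rfl, h'⟩; exact h' h
  have e2 : avoid G b ∅ = ∅ := by ext z; simp
  rw [ip_insert G (by simpa using h.ne), e1, ← insert_empty_eq, ip_insert G (notMem_empty _),
    e2, ip_empty]
  ring

lemma ip_edgeless {G : SimpleGraph V} {A : Finset V} (h : ∀ u ∈ A, ∀ v ∈ A, ¬ G.Adj u v)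
    (x : ℝ) : ip G A x = (1 + x) ^ A.card := by
  induction A using Finset.induction_on with
  | empty => simp
  | insert z A hz ih =>
    have e : avoid G z A = A := by
      ext u
      rw [mem_avoid]
      exact and_iff_left_of_imp fun hu => h z (mem_insert_self _ _) u (mem_insert_of_mem hu)
    rw [ip_insert G hz, e, card_insert_of_notMem hz,
      ih fun u hu v hv => h u (mem_insert_of_mem hu) v (mem_insert_of_mem hv)]
    ring

lemma ip_le_edge {G : SimpleGraph V} {x : ℝ} (hx : x < 0) (hx1 : -1 < x) {A : Finset V}
    (hsp : SP G x A) {k : ℕ} (hk : A.card = k + 2) {a b : V} (ha : a ∈ A) (hb : b ∈ A)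
    (hab : G.Adj a b) : ip G A x ≤ (1 + 2 * x) * (1 + x) ^ k ∧
      (ip G A x = (1 + 2 * x) * (1 + x) ^ k →
        ∀ y ∈ A, ∀ z ∈ A, G.Adj y z → (y = a ∧ z = b) ∨ (y = b ∧ z = a)) := by
  have hsub : ({a, b} : Finset V) ⊆ A := by
    intro z hz; rw [mem_insert, mem_singleton] at hz
    rcases hz with rfl | rfl <;> assumption
  have hu : {a, b} ∪ (A \ {a, b}) = A := union_sdiff_of_subset hsub
  have hc : (A \ {a, b}).card = k := by
    rw [card_sdiff_of_subset hsub, card_pair hab.ne, hk]; omega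
  have := ip_union_le (G := G) hx hx1 {a, b} (A \ {a, b}) disjoint_sdiff (by rwa [hu])
  rw [hu, hc, ip_pair hab] at this
  refine ⟨this.1, fun heq y hy z hz hyz => ?_⟩
  have h := this.2 heq
  have in2 : ∀ y ∈ A, ∀ z ∈ A, G.Adj y z → y = a ∨ y = b := by
    intro y hy z hz hyz
    by_contra hc
    exact h y (mem_sdiff.2 ⟨hy, by simpa using hc⟩) z hz hyz
  have hne := hyz.ne
  rcases in2 y hy z hz hyz with rfl | rfl <;> rcases in2 z hz y hy hyz.symm with rfl | rfl
  · exact absurd rfl hne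
  · exact Or.inl ⟨rfl, rfl⟩
  · exact Or.inr ⟨rfl, rfl⟩
  · exact absurd rfl hne

/-! ### Trees and unicyclic graphs: lower bounds -/

/-- Among trees, the star has the smallest value on the range where it is positive. -/
lemma tree_bound {G : SimpleGraph V} : ∀ (m : ℕ) (B : Finset V), B.card = m + 1 → Conn G B →
    dd G B = 2 * m → ∀ x : ℝ, x < 0 → -1 < x →
    (∀ y ∈ Set.Icc x 0, 0 < y + (1 + y) ^ m) →
    x + (1 + x) ^ m ≤ ip G B x ∧ (x + (1 + x) ^ m = ip G B x →
      ∃ c ∈ B, ∀ u ∈ B, ∀ v ∈ B, G.Adj u v → u = c ∨ v = c) := by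
  intro m
  induction m with
  | zero =>
    intro B hcard _ _ x _ _ _
    obtain ⟨c, rfl⟩ := card_eq_one.1 hcard
    have : ip G {c} x = 1 + x := by
      rw [ip_edgeless]
      · simp
      · intro u hu v hv huv
        rw [mem_singleton] at hu hv
        exact huv.ne (hu.trans hv.symm)
    rw [this]
    refine ⟨by simp [add_comm], fun _ => ⟨c, mem_singleton_self c, fun u hu _ _ _ => ?_⟩⟩
    exact Or.inl (mem_singleton.1 hu)
  | succ m ih =>
    intro B hcard hB hdd x hx hx1 hpos
    obtain ⟨w, hw, hcw⟩ := conn_noncut hB (by omega)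
    have hcard' : (B.erase w).card = m + 1 := by rw [card_erase_of_mem hw]; omega
    have h1 := le_dd _ _ hcard' hcw
    have h2 := one_le_nb hB (by omega) hw
    rw [dd_erase G hw] at hdd
    have hd1 : (nb G w (B.erase w)).card = 1 := by omega
    obtain ⟨u, hu⟩ := card_eq_one.1 hd1
    have hpos' : ∀ y ∈ Set.Icc x 0, 0 < y + (1 + y) ^ m := by
      intro y hy
      have h3 := hpos y hy
      have h4 : (1 + y) ^ (m + 1) ≤ (1 + y) ^ m :=
        pow_le_pow_of_le_one (by linarith [hy.1]) (by linarith [hy.2]) (Nat.le_succ m)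
      linarith
    have hIH := fun (y : ℝ) (h3 : y < 0) (h4 : x ≤ y) =>
      ih (B.erase w) hcard' hcw (by omega) y h3 (by linarith)
        (fun z hz => hpos' z ⟨h4.trans hz.1, hz.2⟩)
    have hsp : SP G x (B.erase w) := by
      refine sp_of_pos G _ x hx.le fun y hy => ?_
      rcases hy.2.lt_or_eq with h3 | h3
      · exact (hpos' y hy).trans_le (hIH y h3 hy.1).1
      · rw [h3, ip_zero]; exact one_pos
    have hca : (avoid G w (B.erase w)).card = m := by
      have := card_avoid_add G w (B.erase w); omega
    obtain ⟨b1, b2⟩ := ip_le_pow hx hx1 (hsp.mono (avoid_subset G w (B.erase w)))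
    rw [hca] at b1 b2
    have b3 := (hIH x hx le_rfl).1
    rw [ip_erase G hw, pow_succ]
    refine ⟨by nlinarith, fun heq => ?_⟩
    have b4 := b2 (le_antisymm b1 (by nlinarith))
    have huB : u ∈ nb G w (B.erase w) := by rw [hu]; exact mem_singleton_self u
    refine ⟨u, mem_of_mem_erase (mem_nb.1 huB).1, ?_⟩
    have key : ∀ p ∈ B, p ≠ u → p = w ∨ p ∈ avoid G w (B.erase w) := by
      intro p hp hpu
      by_cases hpw : p = w
      · exact Or.inl hpw
      · refine Or.inr (mem_avoid.2 ⟨mem_erase.2 ⟨hpw, hp⟩, fun h => hpu ?_⟩)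
        have : p ∈ nb G w (B.erase w) := mem_nb.2 ⟨mem_erase.2 ⟨hpw, hp⟩, h⟩
        rwa [hu, mem_singleton] at this
    intro p hp q hq hpq
    by_contra hc
    push Not at hc
    rcases key p hp hc.1 with rfl | hp' <;> rcases key q hq hc.2 with rfl | hq'
    · exact hpq.ne rfl
    · exact (mem_avoid.1 hq').2 hpq
    · exact (mem_avoid.1 hp').2 hpq.symm
    · exact b4 p hp' q hq' hpq

/-- All edges of `G[B]` are incident with one vertex `u`, with at most one exception `ab`. -/
def IsU (G : SimpleGraph V) (B : Finset V) : Prop :=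
  ∃ u ∈ B, ∃ a ∈ B, ∃ b ∈ B, a ≠ u ∧ b ≠ u ∧ a ≠ b ∧
    ∀ y ∈ B, ∀ z ∈ B, y ≠ u → z ≠ u → G.Adj y z → (y = a ∧ z = b) ∨ (y = b ∧ z = a)

/-- `G[B]` is a 4-cycle. -/
def IsC4 (G : SimpleGraph V) (B : Finset V) : Prop :=
  ∃ w p c q, B = {w, p, c, q} ∧ B.card = 4 ∧ G.Adj w p ∧ G.Adj p c ∧ G.Adj c q ∧ G.Adj q w ∧
    ¬ G.Adj w c ∧ ¬ G.Adj p q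

/-- The equality case in `unicyclic_bound` when the removed vertex `w` has two neighbours. -/
lemma eq_case_two {G : SimpleGraph V} {B : Finset V} {w c : V} (hw : w ∈ B)
    (hconn : Conn G (B.erase w)) (hcard : 3 ≤ B.card)
    (hd : (nb G w (B.erase w)).card = 2) (hc : c ∈ B.erase w)
    (hstar : ∀ u ∈ B.erase w, ∀ v ∈ B.erase w, G.Adj u v → u = c ∨ v = c)
    (hav : ∀ u ∈ avoid G w (B.erase w), ∀ v ∈ avoid G w (B.erase w), ¬ G.Adj u v) :
    IsU G B ∨ IsC4 G B := by
  have hcB := mem_of_mem_erase hc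
  have hcw := ne_of_mem_erase hc
  -- Every vertex of the star other than `c` is adjacent to `c`.
  have hadj : ∀ z ∈ B.erase w, z ≠ c → G.Adj c z := by
    intro z hz hzc
    have h1 := one_le_nb hconn (by rw [card_erase_of_mem hw]; omega) hz
    obtain ⟨t, ht⟩ := card_pos.1 h1
    obtain ⟨ht1, ht2⟩ := mem_nb.1 ht
    rcases hstar z hz t (mem_of_mem_erase ht1) ht2 with h | h
    · exact absurd h hzc
    · exact h ▸ ht2.symm
  by_cases hcn : c ∈ nb G w (B.erase w)
  · left
    obtain ⟨q, hq⟩ : ∃ q, (nb G w (B.erase w)).erase c = {q} :=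
      card_eq_one.1 (by rw [card_erase_of_mem hcn, hd])
    have hqm : q ∈ (nb G w (B.erase w)).erase c := by rw [hq]; exact mem_singleton_self q
    obtain ⟨hqc, hqn⟩ := mem_erase.1 hqm
    obtain ⟨hqe, hqa⟩ := mem_nb.1 hqn
    have only : ∀ z ∈ B, z ≠ c → G.Adj w z → z = q := by
      intro z hz hzc hwz
      have : z ∈ (nb G w (B.erase w)).erase c :=
        mem_erase.2 ⟨hzc, mem_nb.2 ⟨mem_erase.2 ⟨hwz.ne', hz⟩, hwz⟩⟩
      rwa [hq, mem_singleton] at this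
    refine ⟨c, hcB, w, hw, q, mem_of_mem_erase hqe, hcw.symm, hqc, hqa.ne, ?_⟩
    intro y hy z hz hyc hzc hyz
    by_cases hyw : y = w
    · subst hyw
      exact Or.inl ⟨rfl, only z hz hzc hyz⟩
    by_cases hzw : z = w
    · subst hzw
      exact Or.inr ⟨only y hy hyc hyz.symm, rfl⟩
    rcases hstar y (mem_erase.2 ⟨hyw, hy⟩) z (mem_erase.2 ⟨hzw, hz⟩) hyz with h | h
    · exact absurd h hyc
    · exact absurd h hzc
  · right
    have hca : c ∈ avoid G w (B.erase w) :=
      mem_avoid.2 ⟨hc, fun h => hcn (mem_nb.2 ⟨hc, h⟩)⟩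
    have hone : avoid G w (B.erase w) = {c} := by
      refine eq_singleton_iff_unique_mem.2 ⟨hca, fun z hz => ?_⟩
      by_contra hzc
      exact hav c hca z hz (hadj z (mem_avoid.1 hz).1 hzc)
    have hcardB : B.card = 4 := by
      have h1 := card_avoid_add G w (B.erase w)
      rw [hone, hd, card_singleton, card_erase_of_mem hw] at h1
      omega
    obtain ⟨p, q, hpq, hnb⟩ := card_eq_two.1 hd
    have hp : p ∈ nb G w (B.erase w) := by rw [hnb]; simp
    have hq : q ∈ nb G w (B.erase w) := by rw [hnb]; simp
    have hpc : p ≠ c := by rintro rfl; exact hcn hp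
    have hqc : q ≠ c := by rintro rfl; exact hcn hq
    refine ⟨w, p, c, q, ?_, hcardB, (mem_nb.1 hp).2, (hadj p (mem_nb.1 hp).1 hpc).symm,
      hadj q (mem_nb.1 hq).1 hqc, (mem_nb.1 hq).2.symm, (mem_avoid.1 hca).2, fun h => ?_⟩
    · ext z
      simp only [mem_insert, mem_singleton]
      constructor
      · intro hz
        by_cases hzw : z = w
        · exact Or.inl hzw
        have hze : z ∈ B.erase w := mem_erase.2 ⟨hzw, hz⟩
        by_cases hwz : G.Adj w z
        · have : z ∈ nb G w (B.erase w) := mem_nb.2 ⟨hze, hwz⟩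
          rw [hnb, mem_insert, mem_singleton] at this
          rcases this with h | h
          · exact Or.inr (Or.inl h)
          · exact Or.inr (Or.inr (Or.inr h))
        · have : z ∈ avoid G w (B.erase w) := mem_avoid.2 ⟨hze, hwz⟩
          rw [hone, mem_singleton] at this
          exact Or.inr (Or.inr (Or.inl this))
      · rintro (rfl | rfl | rfl | rfl)
        exacts [hw, mem_of_mem_erase (mem_nb.1 hp).1, hcB, mem_of_mem_erase (mem_nb.1 hq).1]
    · rcases hstar p (mem_nb.1 hp).1 q (mem_nb.1 hq).1 h with h | h
      exacts [hpc h, hqc h]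

/-- Among connected unicyclic graphs, `U_n` has the smallest value on the range where it is
positive; only `U_n` and, for `n = 4`, the cycle `C_4` attain it. -/
lemma unicyclic_bound {G : SimpleGraph V} : ∀ (m : ℕ) (B : Finset V), B.card = m + 3 →
    Conn G B → dd G B = 2 * (m + 3) → ∀ x : ℝ, x < 0 → -1 / 2 < x →
    (∀ y ∈ Set.Icc x 0, 0 < y + (1 + 2 * y) * (1 + y) ^ m) →
    x + (1 + 2 * x) * (1 + x) ^ m ≤ ip G B x ∧
      (x + (1 + 2 * x) * (1 + x) ^ m = ip G B x → IsU G B ∨ IsC4 G B) := by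
  intro m
  induction m using Nat.strong_induction_on with
  | _ m ih =>
  intro B hcard hB hdd x hx hx2 hpos
  have hx1 : -1 < x := by linarith
  obtain ⟨w, hw, hcw⟩ := conn_noncut hB (by omega)
  have hcard' : (B.erase w).card = m + 1 + 1 := by rw [card_erase_of_mem hw]; omega
  have h1 := le_dd _ _ hcard' hcw
  have h2 := one_le_nb hB (by omega) hw
  rw [dd_erase G hw] at hdd
  obtain hd | hd : (nb G w (B.erase w)).card = 2 ∨ (nb G w (B.erase w)).card = 1 := by omega
  · -- `B - w` is a tree.
    have hpos' : ∀ y ∈ Set.Icc x 0, 0 < y + (1 + y) ^ (m + 1) := by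
      intro y hy
      have h3 := hpos y hy
      have h4 : 0 ≤ (1 + y) ^ m := pow_nonneg (by linarith [hy.1]) m
      rw [pow_succ]
      nlinarith [hy.2]
    have hIH := fun (y : ℝ) (h3 : y < 0) (h4 : x ≤ y) =>
      tree_bound (m + 1) (B.erase w) hcard' hcw (by omega) y h3 (by linarith)
        (fun z hz => hpos' z ⟨h4.trans hz.1, hz.2⟩)
    have hsp : SP G x (B.erase w) := by
      refine sp_of_pos G _ x hx.le fun y hy => ?_
      rcases hy.2.lt_or_eq with h3 | h3
      · exact (hpos' y hy).trans_le (hIH y h3 hy.1).1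
      · rw [h3, ip_zero]; exact one_pos
    have hca : (avoid G w (B.erase w)).card = m := by
      have := card_avoid_add G w (B.erase w); omega
    obtain ⟨b1, b2⟩ := ip_le_pow hx hx1 (hsp.mono (avoid_subset G w (B.erase w)))
    rw [hca] at b1 b2
    obtain ⟨b3, b4⟩ := hIH x hx le_rfl
    rw [pow_succ] at b3 b4
    rw [ip_erase G hw]
    refine ⟨by nlinarith, fun heq => ?_⟩
    obtain ⟨c, hc, hstar⟩ := b4 (le_antisymm b3 (by nlinarith))
    exact eq_case_two hw hcw (by omega) hd hc hstar (b2 (le_antisymm b1 (by nlinarith)))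
  · -- `w` is a leaf attached to `u`, and `B - w` is unicyclic.
    obtain ⟨u, hu⟩ := card_eq_one.1 hd
    have hun : u ∈ nb G w (B.erase w) := by rw [hu]; exact mem_singleton_self u
    have hue := (mem_nb.1 hun).1
    obtain ⟨k, rfl⟩ : ∃ k, m = k + 1 := by
      refine Nat.exists_eq_add_one.2 (Nat.pos_of_ne_zero ?_)
      rintro rfl
      have := dd_le G (B.erase w)
      rw [hcard'] at this
      omega
    have hpos' : ∀ y ∈ Set.Icc x 0, 0 < y + (1 + 2 * y) * (1 + y) ^ k := by
      intro y hy
      have h3 := hpos y hy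
      have h4 : (1 + y) ^ (k + 1) ≤ (1 + y) ^ k :=
        pow_le_pow_of_le_one (by linarith [hy.1]) (by linarith [hy.2]) (Nat.le_succ k)
      have h5 := mul_le_mul_of_nonneg_left h4 (show 0 ≤ 1 + 2 * y by linarith [hy.1])
      linarith
    have hIH := fun (y : ℝ) (h3 : y < 0) (h4 : x ≤ y) =>
      ih k (Nat.lt_succ_self k) (B.erase w) hcard' hcw (by omega) y h3 (by linarith)
        (fun z hz => hpos' z ⟨h4.trans hz.1, hz.2⟩)
    have hsp : SP G x (B.erase w) := by
      refine sp_of_pos G _ x hx.le fun y hy => ?_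
      rcases hy.2.lt_or_eq with h3 | h3
      · exact (hpos' y hy).trans_le (hIH y h3 hy.1).1
      · rw [h3, ip_zero]; exact one_pos
    have hav : avoid G w (B.erase w) = (B.erase w).erase u := by
      ext z
      have hz : z ∈ nb G w (B.erase w) ↔ z = u := by rw [hu, mem_singleton]
      rw [mem_nb] at hz
      rw [mem_avoid]
      constructor
      · rintro ⟨h3, h4⟩
        exact mem_erase.2 ⟨fun h => h4 (hz.2 h).2, h3⟩
      · intro h'
        obtain ⟨h3, h4⟩ := mem_erase.1 h'
        exact ⟨h4, fun h => h3 (hz.1 ⟨h4, h⟩)⟩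
    have hca : ((B.erase w).erase u).card = k + 2 := by
      rw [card_erase_of_mem hue]; omega
    obtain ⟨a, ha, b, hb, hab⟩ : ∃ a ∈ (B.erase w).erase u, ∃ b ∈ (B.erase w).erase u,
        G.Adj a b := by
      by_contra hc
      push Not at hc
      have h3 := dd_erase G hue
      have h4 := card_le_card (nb_subset G u ((B.erase w).erase u))
      rw [dd_eq_zero hc] at h3
      omega
    obtain ⟨b1, b2⟩ := ip_le_edge hx hx1 (hsp.mono (erase_subset _ _)) hca ha hb hab
    have b3 := (hIH x hx le_rfl).1
    rw [ip_erase G hw, hav, pow_succ]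
    refine ⟨by nlinarith, fun heq => Or.inl ?_⟩
    have b4 := b2 (le_antisymm b1 (by nlinarith))
    have sub : ∀ z ∈ (B.erase w).erase u, z ∈ B := fun z hz =>
      mem_of_mem_erase (mem_of_mem_erase hz)
    have leaf : ∀ z ∈ B, G.Adj w z → z = u := by
      intro z hz hwz
      have : z ∈ nb G w (B.erase w) := mem_nb.2 ⟨mem_erase.2 ⟨hwz.ne', hz⟩, hwz⟩
      rwa [hu, mem_singleton] at this
    refine ⟨u, mem_of_mem_erase hue, a, sub a ha, b, sub b hb, ne_of_mem_erase ha,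
      ne_of_mem_erase hb, hab.ne, fun y hy z hz hyu hzu hyz => ?_⟩
    have hyw : y ≠ w := by rintro rfl; exact hzu (leaf z hz hyz)
    have hzw : z ≠ w := by rintro rfl; exact hyu (leaf y hy hyz.symm)
    exact b4 y (mem_erase.2 ⟨hyu, mem_erase.2 ⟨hyw, hy⟩⟩) z
      (mem_erase.2 ⟨hzu, mem_erase.2 ⟨hzw, hz⟩⟩) hyz

/-! ### Comparison with `U_n` -/

lemma exists_equiv_fin [Fintype V] {m : ℕ} (hcard : Fintype.card V = m + 3) {u a b : V}
    (hau : a ≠ u) (hbu : b ≠ u) (hab : a ≠ b) :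
    ∃ e : V ≃ Fin (m + 3), (e u).val = 0 ∧ (e a).val = 1 ∧ (e b).val = 2 := by
  let e₀ := Fintype.equivFinOfCardEq hcard
  let i0 : Fin (m + 3) := ⟨0, by omega⟩
  let i1 : Fin (m + 3) := ⟨1, by omega⟩
  let i2 : Fin (m + 3) := ⟨2, by omega⟩
  have h01 : i0 ≠ i1 := by simp [i0, i1]
  have h02 : i0 ≠ i2 := by simp [i0, i2]
  have h12 : i1 ≠ i2 := by simp [i1, i2]
  obtain ⟨e1, he1⟩ : ∃ e : V ≃ Fin (m + 3), e u = i0 :=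
    ⟨e₀.trans (Equiv.swap (e₀ u) i0), by simp⟩
  obtain ⟨e2, he2, he2'⟩ : ∃ e : V ≃ Fin (m + 3), e u = i0 ∧ e a = i1 := by
    refine ⟨e1.trans (Equiv.swap (e1 a) i1), ?_, by simp⟩
    rw [Equiv.trans_apply, he1, Equiv.swap_apply_of_ne_of_ne _ h01]
    rw [← he1]
    exact fun h => hau (e1.injective h).symm
  refine ⟨e2.trans (Equiv.swap (e2 b) i2), ?_, ?_, by simp [i2]⟩
  · rw [Equiv.trans_apply, he2, Equiv.swap_apply_of_ne_of_ne _ h02]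
    rw [← he2]
    exact fun h => hbu (e2.injective h).symm
  · rw [Equiv.trans_apply, he2', Equiv.swap_apply_of_ne_of_ne _ h12]
    rw [← he2']
    exact fun h => hab (e2.injective h)

lemma iso_of_isU [Fintype V] {G : SimpleGraph V} {m : ℕ} (hcard : Fintype.card V = m + 3)
    (hdd : dd G univ = 2 * (m + 3)) (h : IsU G univ) : Nonempty (G ≃g Ugraph (m + 3)) := by
  obtain ⟨u, -, a, -, b, -, hau, hbu, hab, hedge⟩ := h
  have hcu : (univ : Finset V).card = m + 3 := by rw [card_univ, hcard]
  have ha : a ∈ univ.erase u := mem_erase.2 ⟨hau, mem_univ a⟩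
  have e1 := dd_erase G (mem_univ u)
  have e2 := dd_erase G ha
  have e3 : dd G ((univ.erase u).erase a) = 0 := by
    refine dd_eq_zero fun y hy z hz hyz => ?_
    simp only [mem_erase, mem_univ, and_true] at hy hz
    rcases hedge y (mem_univ _) z (mem_univ _) hy.2 hz.2 hyz with h | h
    exacts [hy.1 h.1, hz.1 h.2]
  have s1 := nb_subset G u (univ.erase u)
  have c1 := card_le_card s1
  have s2 : nb G a ((univ.erase u).erase a) ⊆ {b} := by
    intro z hz
    simp only [mem_nb, mem_erase, mem_univ, and_true] at hz
    rcases hedge a (mem_univ _) z (mem_univ _) hau hz.1.2 hz.2 with h | h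
    · exact mem_singleton.2 h.2
    · exact absurd h.1 hab
  have c2 := card_le_card s2
  rw [card_singleton] at c2
  have c0 : (univ.erase u).card = m + 2 := by
    rw [card_erase_of_mem (mem_univ u), hcu]; omega
  -- The edge count forces `u` to be adjacent to all vertices, and `a` to `b`.
  have t1 := eq_of_subset_of_card_le s1 (by omega)
  have t2 := eq_of_subset_of_card_le s2 (by rw [card_singleton]; omega)
  have hu : ∀ z, z ≠ u → G.Adj u z := by
    intro z hz
    have : z ∈ nb G u (univ.erase u) := by
      rw [t1]; exact mem_erase.2 ⟨hz, mem_univ z⟩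
    exact (mem_nb.1 this).2
  have habA : G.Adj a b := by
    have : b ∈ nb G a ((univ.erase u).erase a) := by rw [t2]; exact mem_singleton_self b
    exact (mem_nb.1 this).2
  obtain ⟨e, eu, ea, eb⟩ := exists_equiv_fin hcard hau hbu hab
  have ev : ∀ p q : V, (e p).val = (e q).val ↔ p = q := fun p q => by
    rw [← Fin.ext_iff, e.apply_eq_iff_eq]
  have hadj : ∀ p q, (Ugraph (m + 3)).Adj (e p) (e q) ↔
      p ≠ q ∧ ((p = u ∨ (p = a ∧ q = b)) ∨ (q = u ∨ (q = a ∧ p = b))) := by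
    intro p q
    rw [Ugraph, fromRel_adj, ne_eq, Fin.ext_iff, ev, ← eu, ← ea, ← eb]
    simp only [ev]
  refine ⟨⟨e, fun {p q} => ?_⟩⟩
  rw [hadj]
  constructor
  · rintro ⟨hne, (rfl | ⟨rfl, rfl⟩) | (rfl | ⟨rfl, rfl⟩)⟩
    exacts [hu _ hne.symm, habA, (hu _ hne).symm, habA.symm]
  · intro h
    refine ⟨h.ne, ?_⟩
    by_cases hp : p = u
    · exact Or.inl (Or.inl hp)
    by_cases hq : q = u
    · exact Or.inr (Or.inl hq)
    rcases hedge p (mem_univ _) q (mem_univ _) hp hq h with h | h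
    exacts [Or.inl (Or.inr h), Or.inr (Or.inr ⟨h.2, h.1⟩)]

lemma iso_of_isC4 [Fintype V] {G : SimpleGraph V} {n : ℕ} (hcard : Fintype.card V = n)
    (h : IsC4 G univ) : Nonempty (G ≃g cycleGraph n) := by
  obtain ⟨w, p, c, q, hB, h4, h1, h2, h3, h5, h6, h7⟩ := h
  rw [card_univ, hcard] at h4
  subst h4
  have hwc : w ≠ c := by
    rintro rfl
    have h8 := card_le_three (a := w) (b := p) (c := q)
    have h9 : ({w, p, w, q} : Finset V) = {w, p, q} := by ext; simp; tauto
    rw [← h9, ← hB, card_univ] at h8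
    omega
  have hpq : p ≠ q := by
    rintro rfl
    have h8 := card_le_three (a := w) (b := p) (c := c)
    have h9 : ({w, p, c, p} : Finset V) = {w, p, c} := by ext; simp; tauto
    rw [← h9, ← hB, card_univ] at h8
    omega
  refine iso_of_fin hcard ![w, p, c, q] ?_ _ fun k l => ?_
  · intro k l
    fin_cases k <;> fin_cases l <;>
      simp [hwc, hwc.symm, hpq, hpq.symm, h1.ne, h2.ne, h3.ne, h5.ne, h1.ne', h2.ne', h3.ne',
        h5.ne']
  · rw [cycleGraph_adj_val (by omega)]
    fin_cases k <;> fin_cases l <;>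
      simp [h1, h2, h3, h5, h6, h7, h1.symm, h2.symm, h3.symm, h5.symm, G.adj_comm c w,
        G.adj_comm q p]

lemma ip_Ugraph (m : ℕ) (x : ℝ) :
    ip (Ugraph (m + 3)) univ x = x + (1 + 2 * x) * (1 + x) ^ m := by
  have hadj : ∀ i j : Fin (m + 3), (Ugraph (m + 3)).Adj i j ↔ i.val ≠ j.val ∧
      ((i.val = 0 ∨ (i.val = 1 ∧ j.val = 2)) ∨ (j.val = 0 ∨ (j.val = 1 ∧ i.val = 2))) := by
    intro i j
    rw [Ugraph, fromRel_adj, ne_eq, Fin.ext_iff]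
  let i0 : Fin (m + 3) := ⟨0, by omega⟩
  let i1 : Fin (m + 3) := ⟨1, by omega⟩
  let i2 : Fin (m + 3) := ⟨2, by omega⟩
  have hA : avoid (Ugraph (m + 3)) i0 (univ.erase i0) = ∅ := by
    refine eq_empty_of_forall_notMem fun z hz => ?_
    simp only [mem_avoid, mem_erase, mem_univ, and_true, ne_eq, Fin.ext_iff, hadj] at hz
    exact hz.2 ⟨fun h => hz.1 h.symm, Or.inl (Or.inl rfl)⟩
  have hsub : ({i1, i2} : Finset (Fin (m + 3))) ⊆ univ.erase i0 := by
    intro z hz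
    rw [mem_insert, mem_singleton] at hz
    rcases hz with rfl | rfl <;> simp [i0, i1, i2]
  have h12 : i1 ≠ i2 := by simp [i1, i2]
  have hrest : ∀ z ∈ univ.erase i0 \ {i1, i2}, 3 ≤ z.val := by
    intro z hz
    simp only [mem_sdiff, mem_erase, mem_univ, and_true, mem_insert, mem_singleton, ne_eq,
      Fin.ext_iff, i0, i1, i2] at hz
    omega
  have hc : (univ.erase i0 \ {i1, i2}).card = m := by
    rw [card_sdiff_of_subset hsub, card_pair h12, card_erase_of_mem (mem_univ i0), card_univ,
      Fintype.card_fin]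
    omega
  rw [ip_erase _ (mem_univ i0), hA, ip_empty, ← union_sdiff_of_subset hsub,
    ip_union _ _ _ _ disjoint_sdiff, ip_pair, ip_edgeless, hc]
  · ring
  · intro y hy z hz
    have h1 := hrest y hy
    have h2 := hrest z hz
    rw [hadj]
    omega
  · rw [hadj]
    exact ⟨by simp [i1, i2], Or.inl (Or.inr ⟨rfl, rfl⟩)⟩
  · intro y hy z hz
    have h2 := hrest z hz
    have h1 : y.val = 1 ∨ y.val = 2 := by
      simpa [i1, i2, Fin.ext_iff] using hy
    rw [hadj]
    omega

lemma Ugraph_lt [Fintype V] {G : SimpleGraph V} {n : ℕ} (hn : 3 ≤ n)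
    (hcard : Fintype.card V = n) (hG : Unicyclic G) (hC : ¬ Nonempty (G ≃g cycleGraph n))
    (hU : ¬ Nonempty (G ≃g Ugraph n)) {x : ℝ} (hx : x < 0)
    (hpos : ∀ y ∈ Set.Icc x 0, 0 < ip (Ugraph n) univ y) :
    ip (Ugraph n) univ x < ip G univ x := by
  obtain ⟨m, rfl⟩ : ∃ m, n = m + 3 := ⟨n - 3, by omega⟩
  simp only [ip_Ugraph] at hpos ⊢
  have hx2 : -1 / 2 < x := by
    by_contra hc
    have := hpos (-1 / 2) ⟨not_lt.1 hc, by norm_num⟩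
    norm_num at this
  have hdd : dd G univ = 2 * (m + 3) := by rw [dd_univ hG, hcard]
  obtain ⟨h1, h2⟩ := unicyclic_bound m univ (by rw [card_univ, hcard])
    (conn_of_connected hG.1) hdd x hx hx2 hpos
  refine lt_of_le_of_ne h1 fun heq => ?_
  rcases h2 heq with h | h
  · exact hU (iso_of_isU hcard hdd h)
  · exact hC (iso_of_isC4 hcard h)

end Star

/-! ### From strict inequalities to `≺` -/

section Order

variable {V W : Type*} [Fintype V] [Fintype W] [DecidableEq V] [DecidableEq W]

/-- `H ≺ G` follows from `I(G, x) < I(H, x)` for those `x < 0` for which `I(G)` is positive on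
`[x, 0]`; the end point `ξ(G)` is reached by continuity. -/
lemma spre_of {G : SimpleGraph V} {H : SimpleGraph W}
    (h : ∀ x < 0, (∀ y ∈ Set.Icc x 0, 0 < ip G univ y) → ip G univ x < ip H univ x) :
    SPre H G := by
  classical
  have hnn : ∀ x : ℝ, 0 ≤ x → 0 < ip G univ x := by
    intro x hx
    have h0 : (1 : ℝ) ≤ ip G univ x := by
      unfold ip
      have := single_le_sum (s := (univ : Finset V).powerset)
        (f := fun s => if IsIndepFinset G s then x ^ s.card else 0)
        (fun s _ => by positivity) (empty_mem_powerset univ)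
      simpa [IsIndepFinset] using this
    linarith
  have hbdd : BddAbove {x : ℝ | (indepPoly G).eval x = 0} := by
    refine ⟨0, fun x hx => ?_⟩
    by_contra hc
    have := hnn x (not_le.1 hc).le
    rw [← eval_indepPoly] at this
    exact this.ne' hx
  have hnoroot : ∀ x, xi G < x → ip G univ x ≠ 0 := by
    intro x hx h0
    rw [← eval_indepPoly] at h0
    exact absurd (le_csSup hbdd h0) (not_le.2 hx)
  have hposr : ∀ x, xi G < x → x ≤ 0 → 0 < ip G univ x := by
    intro x hx hx0
    by_contra hc
    have hiv := intermediate_value_Icc hx0 (ip_continuous G univ).continuousOn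
    obtain ⟨z, hz, hz0⟩ := hiv ⟨not_lt.1 hc, (hnn 0 le_rfl).le⟩
    exact hnoroot z (hx.trans_le hz.1) hz0
  have hlt : ∀ x, xi G < x → x < 0 → ip G univ x < ip H univ x := fun x hx hx0 =>
    h x hx0 fun y hy => hposr y (hx.trans_le hy.1) hy.2
  refine ⟨fun x hx => ?_, fun heq => ?_⟩
  · rw [eval_indepPoly, eval_indepPoly]
    rcases hx.2.lt_or_eq with hx0 | rfl
    · rcases hx.1.lt_or_eq with hx1 | hx1
      · exact (hlt x hx1 hx0).le
      · refine le_of_tendsto_of_tendsto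
          (ip_continuous G univ).continuousWithinAt.tendsto
          (ip_continuous H univ).continuousWithinAt.tendsto
          (b := nhdsWithin x (Set.Ioi x)) ?_
        filter_upwards [Ioo_mem_nhdsGT hx0] with t ht
        exact (hlt t (hx1 ▸ ht.1) ht.2).le
    · rw [ip_zero, ip_zero]
  · -- `I(G, 0) = 1`, so `I(G)` is positive on some interval `[x, 0]` with `x < 0`.
    have hev : ∀ᶠ t in nhds (0 : ℝ), 0 < ip G univ t :=
      (ip_continuous G univ).continuousAt.eventually (lt_mem_nhds (hnn 0 le_rfl))
    obtain ⟨ε, hε, hball⟩ := Metric.eventually_nhds_iff.1 hev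
    have := h (-ε / 2) (by linarith) fun y hy => hball (by
      rw [Real.dist_eq, sub_zero, abs_of_nonpos hy.2]; linarith [hy.1])
    rw [← eval_indepPoly, ← eval_indepPoly, heq] at this
    exact lt_irrefl _ this

end Order

end UnicyclicAux

/-- If `G` is connected unicyclic of order `n ≥ 3` and isomorphic to none of
`C_n`, `U_n` and (when `n ≥ 4`) `D_n`, then `C_n ≺ G` and `G ≺ U_n`. -/
theorem stmt1 {V : Type*} [Fintype V] (n : ℕ) (hn : 3 ≤ n) (G : SimpleGraph V)
    (hcard : Fintype.card V = n) (hG : Unicyclic G)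
    (hC : ¬ Nonempty (G ≃g cycleGraph n))
    (hU : ¬ Nonempty (G ≃g Ugraph n))
    (hD : 4 ≤ n → ¬ Nonempty (G ≃g Dgraph n)) :
    SPre (cycleGraph n) G ∧ SPre G (Ugraph n) := by
  classical
  refine ⟨UnicyclicAux.spre_of fun x hx hpos => ?_, UnicyclicAux.spre_of fun x hx hpos => ?_⟩
  · exact UnicyclicAux.lt_cycle hn hcard hG hC hD hx
      (UnicyclicAux.sp_of_pos G Finset.univ x hx.le hpos)
  · exact UnicyclicAux.Ugraph_lt hn hcard hG hC hU hx hpos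
end
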